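/- arXiv:1703.05112 — 2 statements merged into one kernel-verified Lean document; each statement's English description precedes it below -/
import Mathlib

section
/- (Weighted heat decay for constant coefficients) Let G* be a positive definite symmetric d×d real matrix, b > 0, and P = −div(G*∇) the associated nonnegative self-adjoint operator on L²(ℝ^d). Let s₁, s₂ ∈ [0, d/2] and κ > 1. Then there exists C ≥ 0 such that for all t ≥ 1, ‖⟨x⟩^{−κ s₁} e^{−tP/b} ⟨x⟩^{−κ s₂}‖_{L(L²(ℝ^d))} ≤ C t^{−(s₁+s₂)/2}. -/
open MeasureTheory

/-! The Gaussian bound `q(ξ) ≥ a‖ξ‖²` makes `e^{-q(D)}` a contraction of `L²` and, by Plancherel and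
Cauchy–Schwarz, bounded from `L²` to `L^∞` with squared norm `O(a^{-d/2})`. Since `⟨x⟩^{-κd}` is
integrable for `κ > 1`, Hölder's inequality with exponent `θ = 2s/d` interpolates between these two
bounds: `⟨x⟩^{-κs} e^{-q(D)}` has norm `O(a^{-s/2})` on `L²`, uniformly in `q`. By duality the
same holds for `e^{-q(D)} ⟨x⟩^{-κs}`, and the splitting `e^{-q(D)} = e^{-q(D)/2} e^{-q(D)/2}` puts a
weight on each side. The heat semigroup is the case where `q` is `t/b` times the symbol of `P`, so
that `a` is proportional to `t`. -/

open Module FourierTransform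
open scoped SchwartzMap

section Interpolation

theorem integrable_rpow_mul_rpow {α : Type*} [MeasurableSpace α] {μ : Measure α} {f g : α → ℝ}
    (hf₀ : ∀ x, 0 ≤ f x) (hg₀ : ∀ x, 0 ≤ g x) (hf : Integrable f μ) (hg : Integrable g μ)
    {θ : ℝ} (hθ₀ : 0 ≤ θ) (hθ₁ : θ ≤ 1) :
    Integrable (fun x ↦ f x ^ θ * g x ^ (1 - θ)) μ := by
  refine ((hf.const_mul θ).add (hg.const_mul (1 - θ))).mono'
    ((hf.1.aemeasurable.pow_const θ).mul (hg.1.aemeasurable.pow_const _)).aestronglyMeasurable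
    (ae_of_all _ fun x ↦ ?_)
  have hx : 0 ≤ f x ^ θ * g x ^ (1 - θ) :=
    mul_nonneg (Real.rpow_nonneg (hf₀ x) _) (Real.rpow_nonneg (hg₀ x) _)
  rw [Real.norm_of_nonneg hx]
  exact Real.geom_mean_le_arith_mean2_weighted hθ₀ (sub_nonneg.2 hθ₁) (hf₀ x) (hg₀ x) (by ring)

theorem integral_rpow_mul_rpow_le {α : Type*} [MeasurableSpace α] {μ : Measure α} {f g : α → ℝ}
    (hf₀ : ∀ x, 0 ≤ f x) (hg₀ : ∀ x, 0 ≤ g x) (hf : Integrable f μ) (hg : Integrable g μ)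
    {θ : ℝ} (hθ₀ : 0 ≤ θ) (hθ₁ : θ ≤ 1) :
    ∫ x, f x ^ θ * g x ^ (1 - θ) ∂μ ≤ (∫ x, f x ∂μ) ^ θ * (∫ x, g x ∂μ) ^ (1 - θ) := by
  have hθ' : 0 ≤ 1 - θ := sub_nonneg.2 hθ₁
  have hF : 0 ≤ ∫ x, f x ∂μ := integral_nonneg hf₀
  have hG : 0 ≤ ∫ x, g x ∂μ := integral_nonneg hg₀
  have hfg : ∀ x, 0 ≤ f x ^ θ * g x ^ (1 - θ) := fun x ↦
    mul_nonneg (Real.rpow_nonneg (hf₀ x) _) (Real.rpow_nonneg (hg₀ x) _)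
  rw [← ENNReal.ofReal_le_ofReal_iff (by positivity), ENNReal.ofReal_mul (by positivity),
    ← ENNReal.ofReal_rpow_of_nonneg hF hθ₀, ← ENNReal.ofReal_rpow_of_nonneg hG hθ',
    ofReal_integral_eq_lintegral_ofReal hf (ae_of_all _ hf₀),
    ofReal_integral_eq_lintegral_ofReal hg (ae_of_all _ hg₀),
    ofReal_integral_eq_lintegral_ofReal (integrable_rpow_mul_rpow hf₀ hg₀ hf hg hθ₀ hθ₁)
      (ae_of_all _ hfg)]
  simp only [ENNReal.ofReal_mul (Real.rpow_nonneg (hf₀ _) _),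
    ← ENNReal.ofReal_rpow_of_nonneg (hf₀ _) hθ₀, ← ENNReal.ofReal_rpow_of_nonneg (hg₀ _) hθ']
  exact ENNReal.lintegral_mul_norm_pow_le hf.1.aemeasurable.ennreal_ofReal
    hg.1.aemeasurable.ennreal_ofReal hθ₀ hθ' (by ring)

theorem integral_rpow_mul_le_of_le {α : Type*} [MeasurableSpace α] {μ : Measure α}
    {w f : α → ℝ} {M : ℝ} (hw₀ : ∀ x, 0 ≤ w x) (hf₀ : ∀ x, 0 ≤ f x) (hw : Integrable w μ)
    (hf : Integrable f μ) (hfM : ∀ x, f x ≤ M) (hM : 0 ≤ M) {θ : ℝ} (hθ₀ : 0 ≤ θ) (hθ₁ : θ ≤ 1) :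
    ∫ x, w x ^ θ * f x ∂μ ≤ (M * ∫ x, w x ∂μ) ^ θ * (∫ x, f x ∂μ) ^ (1 - θ) := by
  have hMw₀ : ∀ x, 0 ≤ M * w x := fun x ↦ mul_nonneg hM (hw₀ x)
  have hMw : Integrable (fun x ↦ M * w x) μ := hw.const_mul M
  have hpoint : ∀ x, w x ^ θ * f x ≤ (M * w x) ^ θ * f x ^ (1 - θ) := fun x ↦ by
    have hwx := hw₀ x
    have hfx := hf₀ x
    calc w x ^ θ * f x = w x ^ θ * (f x ^ θ * f x ^ (1 - θ)) := by
          rw [← Real.rpow_add' hfx (by simp)]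
          simp
      _ ≤ w x ^ θ * (M ^ θ * f x ^ (1 - θ)) := by gcongr; exact hfM x
      _ = (M * w x) ^ θ * f x ^ (1 - θ) := by rw [Real.mul_rpow hM hwx]; ring
  calc ∫ x, w x ^ θ * f x ∂μ ≤ ∫ x, (M * w x) ^ θ * f x ^ (1 - θ) ∂μ :=
        integral_mono_of_nonneg
          (ae_of_all _ fun x ↦ mul_nonneg (Real.rpow_nonneg (hw₀ x) _) (hf₀ x))
          (integrable_rpow_mul_rpow hMw₀ hf₀ hMw hf hθ₀ hθ₁) (ae_of_all _ hpoint)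
    _ ≤ (∫ x, M * w x ∂μ) ^ θ * (∫ x, f x ∂μ) ^ (1 - θ) :=
        integral_rpow_mul_rpow_le hMw₀ hf₀ hMw hf hθ₀ hθ₁
    _ = (M * ∫ x, w x ∂μ) ^ θ * (∫ x, f x ∂μ) ^ (1 - θ) := by rw [integral_const_mul]

end Interpolation

theorem sq_integral_norm_mul_norm_le {α E F : Type*} [MeasurableSpace α] {μ : Measure α}
    [NormedAddCommGroup E] [NormedAddCommGroup F] {f : α → E} {g : α → F} (hf : MemLp f 2 μ)
    (hg : MemLp g 2 μ) :
    (∫ x, ‖f x‖ * ‖g x‖ ∂μ) ^ 2 ≤ (∫ x, ‖f x‖ ^ 2 ∂μ) * ∫ x, ‖g x‖ ^ 2 ∂μ := by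
  have hHolder : ∫ x, ‖f x‖ * ‖g x‖ ∂μ ≤ √(∫ x, ‖f x‖ ^ 2 ∂μ) * √(∫ x, ‖g x‖ ^ 2 ∂μ) := by
    simpa only [norm_norm, Real.rpow_two, Real.sqrt_eq_rpow] using
      integral_mul_norm_le_Lp_mul_Lq (f := fun x ↦ ‖f x‖) (g := fun x ↦ ‖g x‖)
        Real.HolderConjugate.two_two (by simpa using hf.norm) (by simpa using hg.norm)
  refine (pow_le_pow_left₀ (by positivity) hHolder 2).trans_eq ?_
  rw [mul_pow, Real.sq_sqrt (by positivity), Real.sq_sqrt (by positivity)]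

theorem norm_le_mul_of_formal_adjoint {𝕜 α E : Type*} [RCLike 𝕜] [NormedAddCommGroup E]
    [InnerProductSpace 𝕜 E] (j : α → E) {S T : α → α} {K : ℝ} (hK : 0 ≤ K)
    (hST : ∀ f g, inner 𝕜 (j (S f)) (j g) = inner 𝕜 (j f) (j (T g)))
    (hT : ∀ f, ‖j (T f)‖ ≤ K * ‖j f‖) (f : α) : ‖j (S f)‖ ≤ K * ‖j f‖ := by
  have hsq : ‖j (S f)‖ * ‖j (S f)‖ ≤ K * ‖j f‖ * ‖j (S f)‖ := by
    calc ‖j (S f)‖ * ‖j (S f)‖ = RCLike.re (inner 𝕜 (j f) (j (T (S f)))) := by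
          rw [← hST, inner_self_eq_norm_mul_norm]
      _ ≤ ‖j f‖ * ‖j (T (S f))‖ := re_inner_le_norm _ _
      _ ≤ ‖j f‖ * (K * ‖j (S f)‖) := by gcongr; exact hT _
      _ = K * ‖j f‖ * ‖j (S f)‖ := by ring
  rcases (norm_nonneg (j (S f))).eq_or_lt with h | h
  · rw [← h]; positivity
  · exact le_of_mul_le_mul_right hsq h

section SchwartzL2

variable {V H : Type*} [NormedAddCommGroup V] [InnerProductSpace ℝ V] [FiniteDimensional ℝ V]
  [MeasurableSpace V] [BorelSpace V] [NormedAddCommGroup H] [InnerProductSpace ℂ H]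

theorem norm_toL2_sq (f : 𝓢(V, H)) : ‖f.toLp 2‖ ^ 2 = ∫ x, ‖f x‖ ^ 2 := by
  have h : ‖f.toLp 2‖ = (∫ x, ‖f x‖ ^ (2 : ℝ)) ^ (1 / 2 : ℝ) := by
    simpa using SchwartzMap.norm_toLp' (f := f) (μ := volume) (p := 2) (by simp) (by simp)
  rw [h, ← Real.sqrt_eq_rpow, Real.sq_sqrt (by positivity)]
  simp

theorem norm_toL2_eq_sqrt (f : 𝓢(V, H)) : ‖f.toLp 2‖ = √(∫ x, ‖f x‖ ^ 2) := by
  rw [← norm_toL2_sq, Real.sqrt_sq (norm_nonneg _)]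

theorem integrable_norm_sq (f : 𝓢(V, H)) : Integrable fun x ↦ ‖f x‖ ^ 2 :=
  (f.memLp 2).integrable_norm_pow two_ne_zero

theorem norm_toL2_smulLeftCLM_sq {m : V → ℝ} (hm : m.HasTemperateGrowth) (f : 𝓢(V, H)) :
    ‖(SchwartzMap.smulLeftCLM H m f).toLp 2‖ ^ 2 = ∫ x, m x ^ 2 * ‖f x‖ ^ 2 := by
  simp only [norm_toL2_sq, SchwartzMap.smulLeftCLM_apply_apply hm, norm_smul, mul_pow,
    Real.norm_eq_abs, sq_abs]

theorem norm_toL2_smulLeftCLM_le {m : V → ℝ} (hm : m.HasTemperateGrowth) {K : ℝ}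
    (hmK : ∀ x, |m x| ≤ K) (f : 𝓢(V, H)) :
    ‖(SchwartzMap.smulLeftCLM H m f).toLp 2‖ ≤ K * ‖f.toLp 2‖ := by
  have hK : 0 ≤ K := (abs_nonneg _).trans (hmK 0)
  refine le_of_sq_le_sq ?_ (by positivity)
  rw [mul_pow, norm_toL2_sq, norm_toL2_sq, ← integral_const_mul]
  refine integral_mono (integrable_norm_sq _) ((integrable_norm_sq f).const_mul _) fun x ↦ ?_
  rw [SchwartzMap.smulLeftCLM_apply_apply hm, norm_smul, mul_pow]
  gcongr
  exact hmK x

theorem inner_toL2_smulLeftCLM {m : V → ℝ} (hm : m.HasTemperateGrowth) (f g : 𝓢(V, H)) :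
    inner ℂ ((SchwartzMap.smulLeftCLM H m f).toLp 2) (g.toLp 2) =
      inner ℂ (f.toLp 2) ((SchwartzMap.smulLeftCLM H m g).toLp 2) := by
  simp only [SchwartzMap.inner_toL2_toL2_eq, SchwartzMap.smulLeftCLM_apply_apply hm,
    inner_smul_left_eq_smul, inner_smul_right_eq_smul]

variable [CompleteSpace H]

theorem inner_toL2_fourierMultiplierCLM {m : V → ℝ} (hm : m.HasTemperateGrowth) (f g : 𝓢(V, H)) :
    inner ℂ ((SchwartzMap.fourierMultiplierCLM H m f).toLp 2) (g.toLp 2) =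
      inner ℂ (f.toLp 2) ((SchwartzMap.fourierMultiplierCLM H m g).toLp 2) := by
  rw [← SchwartzMap.inner_fourier_toL2_eq, ← SchwartzMap.inner_fourier_toL2_eq f]
  simp only [SchwartzMap.fourierMultiplierCLM_apply, FourierTransform.fourier_fourierInv_eq]
  exact inner_toL2_smulLeftCLM hm _ _

theorem norm_toL2_fourierMultiplierCLM_le {m : V → ℝ} (hm : m.HasTemperateGrowth) {K : ℝ}
    (hmK : ∀ x, |m x| ≤ K) (f : 𝓢(V, H)) :
    ‖(SchwartzMap.fourierMultiplierCLM H m f).toLp 2‖ ≤ K * ‖f.toLp 2‖ := by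
  rw [← SchwartzMap.norm_fourier_toL2_eq, ← SchwartzMap.norm_fourier_toL2_eq f,
    SchwartzMap.fourierMultiplierCLM_apply, FourierTransform.fourier_fourierInv_eq]
  exact norm_toL2_smulLeftCLM_le hm hmK _

theorem norm_fourierMultiplierCLM_apply_sq_le {m : V → ℝ} (hm : m.HasTemperateGrowth)
    (hm₂ : MemLp m 2) (f : 𝓢(V, H)) (x : V) :
    ‖SchwartzMap.fourierMultiplierCLM H m f x‖ ^ 2 ≤ (∫ ξ, m ξ ^ 2) * ‖f.toLp 2‖ ^ 2 := by
  have hsup : ‖SchwartzMap.fourierMultiplierCLM H m f x‖ ≤ ∫ ξ, ‖m ξ‖ * ‖𝓕 f ξ‖ := by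
    rw [SchwartzMap.fourierMultiplierCLM_apply, SchwartzMap.fourierInv_coe, Real.fourierInv_eq]
    refine (norm_integral_le_integral_norm _).trans_eq ?_
    simp only [Circle.norm_smul, SchwartzMap.smulLeftCLM_apply_apply hm, norm_smul]
  have hplancherel : ∫ ξ, ‖𝓕 f ξ‖ ^ 2 = ‖f.toLp 2‖ ^ 2 := by
    rw [← norm_toL2_sq, SchwartzMap.norm_fourier_toL2_eq]
  have hcauchy := sq_integral_norm_mul_norm_le hm₂ ((𝓕 f).memLp 2)
  simp only [hplancherel, Real.norm_eq_abs, sq_abs] at hcauchy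
  exact (pow_le_pow_left₀ (norm_nonneg _) hsup 2).trans hcauchy

end SchwartzL2

section HeatMultiplier

theorem hasTemperateGrowth_exp_neg {E : Type*} [NormedAddCommGroup E] [NormedSpace ℝ E]
    {q : E → ℝ} (hq : q.HasTemperateGrowth) (hq₀ : ∀ x, 0 ≤ q x) :
    (fun x ↦ Real.exp (-q x)).HasTemperateGrowth := by
  have hrange : Set.range (fun x ↦ -q x) ⊆ Set.Iio (1 : ℝ) := by
    rintro _ ⟨x, rfl⟩
    exact (neg_nonpos.2 (hq₀ x)).trans_lt one_pos
  have hopen : UniqueDiffOn ℝ (Set.Iio (1 : ℝ)) := isOpen_Iio.uniqueDiffOn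
  refine Function.HasTemperateGrowth.comp' (g := Real.exp) hrange hopen
    Real.contDiff_exp.contDiffOn (fun _ ↦ ⟨0, Real.exp 1, by positivity, fun n _ y hy ↦ ?_⟩) hq.neg
  rw [norm_iteratedFDerivWithin_eq_norm_iteratedDerivWithin,
    iteratedDerivWithin_eq_iteratedDeriv hopen Real.contDiff_exp.contDiffAt hy,
    iteratedDeriv_eq_iterate, Real.iter_deriv_exp]
  simpa using (Set.mem_Iio.1 hy).le

variable {V H : Type*} [NormedAddCommGroup V] [InnerProductSpace ℝ V] [FiniteDimensional ℝ V]
  [MeasurableSpace V] [BorelSpace V] [NormedAddCommGroup H] [InnerProductSpace ℂ H]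

theorem integrable_exp_neg_mul_norm_sq {a : ℝ} (ha : 0 < a) :
    Integrable fun x : V ↦ Real.exp (-a * ‖x‖ ^ 2) := by
  simpa [Complex.norm_exp, ← Complex.ofReal_pow] using
    (GaussianFourier.integrable_cexp_neg_mul_sq_norm_add (V := V) (b := a) (by simpa) 0 0).norm

theorem integrable_exp_neg_of_mul_norm_sq_le {q : V → ℝ} (hq : Continuous q) {a : ℝ} (ha : 0 < a)
    (hqa : ∀ x, a * ‖x‖ ^ 2 ≤ q x) : Integrable fun x ↦ Real.exp (-q x) := by
  refine (integrable_exp_neg_mul_norm_sq ha).mono' (by fun_prop) (ae_of_all _ fun x ↦ ?_)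
  simpa using hqa x

theorem integral_exp_neg_le_of_mul_norm_sq_le {q : V → ℝ} (hq : Continuous q) {a : ℝ} (ha : 0 < a)
    (hqa : ∀ x, a * ‖x‖ ^ 2 ≤ q x) :
    ∫ x, Real.exp (-q x) ≤ (Real.pi / a) ^ (finrank ℝ V / 2 : ℝ) := by
  rw [← GaussianFourier.integral_rexp_neg_mul_sq_norm ha]
  refine integral_mono (integrable_exp_neg_of_mul_norm_sq_le hq ha hqa)
    (integrable_exp_neg_mul_norm_sq ha) fun x ↦ ?_
  simpa using hqa x

variable (H) in
/-- The operator `e^{-q(D)}` on Schwartz functions, generalizing the heat semigroup. It multiplies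
Mathlib's Fourier transform, whose kernel is `e^{-2πi⟨x, ξ⟩}`, by `e^{-q(ξ)}`. -/
noncomputable def expNegMultiplier (q : V → ℝ) : 𝓢(V, H) →L[ℝ] 𝓢(V, H) :=
  SchwartzMap.fourierMultiplierCLM H fun ξ ↦ Real.exp (-q ξ)

variable [CompleteSpace H]

theorem expNegMultiplier_expNegMultiplier {p q : V → ℝ} (hp : p.HasTemperateGrowth)
    (hq : q.HasTemperateGrowth) (hp₀ : ∀ ξ, 0 ≤ p ξ) (hq₀ : ∀ ξ, 0 ≤ q ξ) (f : 𝓢(V, H)) :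
    expNegMultiplier H p (expNegMultiplier H q f) = expNegMultiplier H (p + q) f := by
  rw [expNegMultiplier, expNegMultiplier, expNegMultiplier,
    SchwartzMap.fourierMultiplierCLM_fourierMultiplierCLM_apply (hasTemperateGrowth_exp_neg hp hp₀)
      (hasTemperateGrowth_exp_neg hq hq₀)]
  congr! 2
  ext ξ
  simp [Real.exp_add, mul_comm]

theorem norm_toL2_expNegMultiplier_le {q : V → ℝ} (hq : q.HasTemperateGrowth)
    (hq₀ : ∀ ξ, 0 ≤ q ξ) (f : 𝓢(V, H)) : ‖(expNegMultiplier H q f).toLp 2‖ ≤ ‖f.toLp 2‖ := by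
  simpa [expNegMultiplier] using norm_toL2_fourierMultiplierCLM_le
    (hasTemperateGrowth_exp_neg hq hq₀) (K := 1) (fun ξ ↦ by simpa using hq₀ ξ) f

theorem norm_expNegMultiplier_apply_sq_le {q : V → ℝ} (hq : q.HasTemperateGrowth) {a : ℝ}
    (ha : 0 < a) (hqa : ∀ ξ, a * ‖ξ‖ ^ 2 ≤ q ξ) (f : 𝓢(V, H)) (x : V) :
    ‖expNegMultiplier H q f x‖ ^ 2 ≤
      (Real.pi / (2 * a)) ^ (finrank ℝ V / 2 : ℝ) * ‖f.toLp 2‖ ^ 2 := by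
  have hq₀ : ∀ ξ, 0 ≤ q ξ := fun ξ ↦ (by positivity : 0 ≤ a * ‖ξ‖ ^ 2).trans (hqa ξ)
  have hcont : Continuous fun ξ ↦ 2 * q ξ := hq.1.continuous.const_mul 2
  have hqa₂ : ∀ ξ, 2 * a * ‖ξ‖ ^ 2 ≤ 2 * q ξ := fun ξ ↦ by linarith [hqa ξ]
  have hsq : (fun ξ ↦ Real.exp (-q ξ) ^ 2) = fun ξ ↦ Real.exp (-(2 * q ξ)) := by
    ext ξ
    rw [← Real.exp_nat_mul]
    congr 1
    push_cast
    ring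
  have hexp := hasTemperateGrowth_exp_neg hq hq₀
  have hmem : MemLp (fun ξ ↦ Real.exp (-q ξ)) 2 (volume : Measure V) := by
    rw [memLp_two_iff_integrable_sq hexp.1.continuous.aestronglyMeasurable, hsq]
    exact integrable_exp_neg_of_mul_norm_sq_le hcont (by positivity) hqa₂
  refine (norm_fourierMultiplierCLM_apply_sq_le hexp hmem f x).trans ?_
  rw [hsq]
  gcongr
  exact integral_exp_neg_le_of_mul_norm_sq_le hcont (by positivity) hqa₂

end HeatMultiplier

section Weighted

variable {V H : Type*} [NormedAddCommGroup V] [InnerProductSpace ℝ V] [NormedAddCommGroup H]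
  [InnerProductSpace ℂ H]

variable (V H) in
/-- Multiplication of Schwartz functions by the power `⟨x⟩ ^ r` of the Japanese bracket
`⟨x⟩ = (1 + ‖x‖ ^ 2) ^ (1 / 2)`: the weights of the decay estimate. -/
noncomputable def bracketMul (r : ℝ) : 𝓢(V, H) →L[ℝ] 𝓢(V, H) :=
  SchwartzMap.smulLeftCLM H fun x ↦ (1 + ‖x‖ ^ 2) ^ (r / 2)

theorem bracketMul_apply (r : ℝ) (f : 𝓢(V, H)) (x : V) :
    bracketMul V H r f x = (1 + ‖x‖ ^ 2) ^ (r / 2) • f x :=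
  SchwartzMap.smulLeftCLM_apply_apply (Function.hasTemperateGrowth_one_add_norm_sq_rpow V _) f x

variable [FiniteDimensional ℝ V] [MeasurableSpace V] [BorelSpace V]

theorem norm_toL2_bracketMul_sq (r : ℝ) (f : 𝓢(V, H)) :
    ‖(bracketMul V H r f).toLp 2‖ ^ 2 = ∫ x, (1 + ‖x‖ ^ 2) ^ r * ‖f x‖ ^ 2 := by
  rw [bracketMul, norm_toL2_smulLeftCLM_sq (Function.hasTemperateGrowth_one_add_norm_sq_rpow V _)]
  congr! 3 with x
  rw [← Real.rpow_mul_natCast (by positivity)]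
  norm_num

theorem norm_toL2_bracketMul_eq_sqrt (r : ℝ) (f : 𝓢(V, H)) :
    ‖(bracketMul V H r f).toLp 2‖ = √(∫ x, (1 + ‖x‖ ^ 2) ^ r * ‖f x‖ ^ 2) := by
  rw [← norm_toL2_bracketMul_sq, Real.sqrt_sq (norm_nonneg _)]

theorem exists_interpolation_exponents {d s κ : ℝ} (hd : 0 ≤ d) (hs : s ∈ Set.Icc 0 (d / 2))
    (hκ : 1 < κ) :
    ∃ θ r : ℝ, 0 ≤ θ ∧ θ ≤ 1 ∧ d < r ∧ r / 2 * θ = κ * s ∧ d / 2 * θ = s := by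
  rcases hd.eq_or_lt with rfl | hpos
  · obtain rfl : s = 0 := by linarith [hs.1, hs.2]
    exact ⟨0, 1, le_rfl, zero_le_one, one_pos, by simp, by simp⟩
  · have hθ₁ : 2 * s / d ≤ 1 := by rw [div_le_one hpos]; linarith [hs.2]
    have hθ₀ : 0 ≤ 2 * s / d := div_nonneg (by linarith [hs.1]) hd
    exact ⟨2 * s / d, κ * d, hθ₀, hθ₁, lt_mul_of_one_lt_left hpos hκ, by field_simp, by field_simp⟩

variable [CompleteSpace H]

theorem norm_toL2_bracketMul_expNegMultiplier_sq_le {r θ : ℝ} (hr : finrank ℝ V < r)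
    (hθ₀ : 0 ≤ θ) (hθ₁ : θ ≤ 1) {q : V → ℝ} (hq : q.HasTemperateGrowth) {a : ℝ} (ha : 0 < a)
    (hqa : ∀ ξ, a * ‖ξ‖ ^ 2 ≤ q ξ) (f : 𝓢(V, H)) :
    ‖(bracketMul V H (-(r / 2 * θ)) (expNegMultiplier H q f)).toLp 2‖ ^ 2 ≤
      ((Real.pi / 2) ^ (finrank ℝ V / 2 : ℝ) * ∫ x : V, (1 + ‖x‖ ^ 2) ^ (-r / 2)) ^ θ *
        a ^ (-(finrank ℝ V / 2 * θ)) * ‖f.toLp 2‖ ^ 2 := by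
  have hq₀ : ∀ ξ, 0 ≤ q ξ := fun ξ ↦ (by positivity : 0 ≤ a * ‖ξ‖ ^ 2).trans (hqa ξ)
  have hw : Integrable fun x : V ↦ (1 + ‖x‖ ^ 2) ^ (-r / 2) :=
    integrable_rpow_neg_one_add_norm_sq hr
  set δ : ℝ := finrank ℝ V / 2
  set J : ℝ := ∫ x : V, (1 + ‖x‖ ^ 2) ^ (-r / 2)
  set N : ℝ := ‖f.toLp 2‖ ^ 2
  set u := expNegMultiplier H q f
  have hN : 0 ≤ N := by positivity
  have hsup : ∀ x, ‖u x‖ ^ 2 ≤ (Real.pi / (2 * a)) ^ δ * N :=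
    norm_expNegMultiplier_apply_sq_le hq ha hqa f
  have hL2 : ∫ x, ‖u x‖ ^ 2 ≤ N := by
    rw [← norm_toL2_sq]
    exact pow_le_pow_left₀ (norm_nonneg _) (norm_toL2_expNegMultiplier_le hq hq₀ f) 2
  have hinterp : ∫ x, ((1 + ‖x‖ ^ 2) ^ (-r / 2)) ^ θ * ‖u x‖ ^ 2 ≤
      ((Real.pi / (2 * a)) ^ δ * N * J) ^ θ * (∫ x, ‖u x‖ ^ 2) ^ (1 - θ) :=
    integral_rpow_mul_le_of_le (fun x ↦ by positivity) (fun x ↦ by positivity) hw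
      (integrable_norm_sq u) hsup (by positivity) hθ₀ hθ₁
  have hweight : ∀ x : V, (1 + ‖x‖ ^ 2) ^ (-(r / 2 * θ)) = ((1 + ‖x‖ ^ 2) ^ (-r / 2)) ^ θ :=
    fun x ↦ by
      rw [← Real.rpow_mul (by positivity)]
      congr 1
      ring
  simp only [norm_toL2_bracketMul_sq, hweight]
  calc ∫ x, ((1 + ‖x‖ ^ 2) ^ (-r / 2)) ^ θ * ‖u x‖ ^ 2
      ≤ ((Real.pi / (2 * a)) ^ δ * N * J) ^ θ * N ^ (1 - θ) := hinterp.trans (by gcongr)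
    _ = ((Real.pi / 2) ^ δ * J * a ^ (-δ)) ^ θ * (N ^ θ * N ^ (1 - θ)) := by
        rw [← div_div, Real.div_rpow (by positivity) ha.le, div_eq_mul_inv, ← Real.rpow_neg ha.le,
          ← mul_assoc, ← Real.mul_rpow (by positivity) hN]
        ring_nf
    _ = ((Real.pi / 2) ^ δ * J) ^ θ * a ^ (-(δ * θ)) * N := by
        rw [← Real.rpow_add' hN (by simp), add_sub_cancel, Real.rpow_one,
          Real.mul_rpow (by positivity) (by positivity), ← Real.rpow_mul ha.le, neg_mul]

theorem exists_norm_toL2_bracketMul_expNegMultiplier_le {s κ : ℝ}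
    (hs : s ∈ Set.Icc (0 : ℝ) (finrank ℝ V / 2)) (hκ : 1 < κ) :
    ∃ C : ℝ, 0 ≤ C ∧ ∀ q : V → ℝ, q.HasTemperateGrowth → ∀ a : ℝ, 0 < a →
      (∀ ξ, a * ‖ξ‖ ^ 2 ≤ q ξ) → ∀ f : 𝓢(V, H),
        ‖(bracketMul V H (-(κ * s)) (expNegMultiplier H q f)).toLp 2‖ ≤
          C * a ^ (-s / 2) * ‖f.toLp 2‖ := by
  obtain ⟨θ, r, hθ₀, hθ₁, hr, hrθ, hθs⟩ := exists_interpolation_exponents (by positivity) hs hκ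
  set K : ℝ := ((Real.pi / 2) ^ (finrank ℝ V / 2 : ℝ) *
    ∫ x : V, (1 + ‖x‖ ^ 2) ^ (-r / 2)) ^ θ with hK_def
  have hK : 0 ≤ K :=
    Real.rpow_nonneg (mul_nonneg (by positivity) (integral_nonneg fun x ↦ by positivity)) _
  refine ⟨√K, by positivity, fun q hq a ha hqa f ↦ le_of_sq_le_sq ?_ (by positivity)⟩
  have hmain := norm_toL2_bracketMul_expNegMultiplier_sq_le hr hθ₀ hθ₁ hq ha hqa f
  rw [hrθ, hθs, ← hK_def] at hmain
  refine hmain.trans_eq ?_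
  rw [mul_pow, mul_pow, Real.sq_sqrt hK, ← Real.rpow_mul_natCast ha.le, Nat.cast_two,
    div_mul_cancel₀ _ two_ne_zero]

theorem norm_toL2_expNegMultiplier_bracketMul_le {q : V → ℝ} (hq : q.HasTemperateGrowth)
    (hq₀ : ∀ ξ, 0 ≤ q ξ) {r K : ℝ} (hK : 0 ≤ K)
    (h : ∀ f : 𝓢(V, H), ‖(bracketMul V H r (expNegMultiplier H q f)).toLp 2‖ ≤ K * ‖f.toLp 2‖)
    (f : 𝓢(V, H)) : ‖(expNegMultiplier H q (bracketMul V H r f)).toLp 2‖ ≤ K * ‖f.toLp 2‖ := by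
  refine norm_le_mul_of_formal_adjoint (𝕜 := ℂ) (fun f : 𝓢(V, H) ↦ f.toLp 2)
    (S := fun f ↦ expNegMultiplier H q (bracketMul V H r f)) hK (fun f g ↦ ?_) h f
  exact (inner_toL2_fourierMultiplierCLM (hasTemperateGrowth_exp_neg hq hq₀) _ g).trans
    (inner_toL2_smulLeftCLM (Function.hasTemperateGrowth_one_add_norm_sq_rpow V _) f _)

theorem exists_norm_toL2_bracketMul_expNegMultiplier_bracketMul_le {s₁ s₂ κ : ℝ}
    (hs₁ : s₁ ∈ Set.Icc (0 : ℝ) (finrank ℝ V / 2)) (hs₂ : s₂ ∈ Set.Icc (0 : ℝ) (finrank ℝ V / 2))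
    (hκ : 1 < κ) :
    ∃ C : ℝ, 0 ≤ C ∧ ∀ q : V → ℝ, q.HasTemperateGrowth → ∀ a : ℝ, 0 < a →
      (∀ ξ, a * ‖ξ‖ ^ 2 ≤ q ξ) → ∀ f : 𝓢(V, H),
        ‖(bracketMul V H (-(κ * s₁))
          (expNegMultiplier H q (bracketMul V H (-(κ * s₂)) f))).toLp 2‖ ≤
          C * a ^ (-(s₁ + s₂) / 2) * ‖f.toLp 2‖ := by
  obtain ⟨C₁, hC₁₀, hC₁⟩ :=
    exists_norm_toL2_bracketMul_expNegMultiplier_le (V := V) (H := H) hs₁ hκ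
  obtain ⟨C₂, hC₂₀, hC₂⟩ :=
    exists_norm_toL2_bracketMul_expNegMultiplier_le (V := V) (H := H) hs₂ hκ
  refine ⟨C₁ * C₂ * (1 / 2) ^ (-(s₁ + s₂) / 2), by positivity, fun q hq a ha hqa f ↦ ?_⟩
  set p : V → ℝ := fun ξ ↦ 1 / 2 * q ξ
  have hp : p.HasTemperateGrowth := by fun_prop
  have hpa : ∀ ξ, 1 / 2 * a * ‖ξ‖ ^ 2 ≤ p ξ := fun ξ ↦ by simp only [p]; linarith [hqa ξ]
  have hp₀ : ∀ ξ, 0 ≤ p ξ := fun ξ ↦ (by positivity : 0 ≤ 1 / 2 * a * ‖ξ‖ ^ 2).trans (hpa ξ)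
  have hqp : q = p + p := by
    ext ξ
    simp only [p, Pi.add_apply]
    ring
  have ha₂ : 0 < 1 / 2 * a := by positivity
  set g := expNegMultiplier H p (bracketMul V H (-(κ * s₂)) f)
  have hg : ‖g.toLp 2‖ ≤ C₂ * (1 / 2 * a) ^ (-s₂ / 2) * ‖f.toLp 2‖ :=
    norm_toL2_expNegMultiplier_bracketMul_le hp hp₀ (by positivity) (hC₂ p hp _ ha₂ hpa) f
  rw [hqp, ← expNegMultiplier_expNegMultiplier hp hp hp₀ hp₀]
  refine ((hC₁ p hp _ ha₂ hpa g).trans (mul_le_mul_of_nonneg_left hg (by positivity))).trans_eq ?_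
  rw [mul_assoc (C₁ * C₂), ← Real.mul_rpow (by norm_num) ha.le, neg_add, add_div,
    Real.rpow_add ha₂]
  ring

end Weighted

section Coordinates

theorem exists_pos_mul_norm_sq_le {E : Type*} [NormedAddCommGroup E] [NormedSpace ℝ E]
    [ProperSpace E] {q : E → ℝ} (hq : Continuous q)
    (hhom : ∀ (a : ℝ) x, q (a • x) = a ^ 2 * q x) (hpos : ∀ x, x ≠ 0 → 0 < q x) :
    ∃ c : ℝ, 0 < c ∧ ∀ x, c * ‖x‖ ^ 2 ≤ q x := by
  rcases subsingleton_or_nontrivial E with hE | hE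
  · refine ⟨1, one_pos, fun x ↦ ?_⟩
    simpa [Subsingleton.elim x 0] using (hhom 0 0).ge
  · obtain ⟨x₀, hx₀, hmin⟩ := (isCompact_sphere (0 : E) 1).exists_isMinOn
      (NormedSpace.sphere_nonempty.2 zero_le_one) hq.continuousOn
    refine ⟨q x₀, hpos x₀ (ne_zero_of_mem_unit_sphere ⟨x₀, hx₀⟩), fun x ↦ ?_⟩
    obtain ⟨u, hu, hxu⟩ : ∃ u ∈ Metric.sphere (0 : E) 1, x = ‖x‖ • u := by
      rcases eq_or_ne x 0 with rfl | hx
      · exact ⟨x₀, hx₀, by simp⟩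
      · exact ⟨‖x‖⁻¹ • x, by simp [norm_smul, hx], by simp [smul_smul, hx]⟩
    calc q x₀ * ‖x‖ ^ 2 ≤ q u * ‖x‖ ^ 2 := by gcongr; exact hmin hu
      _ = q x := by rw [mul_comm, ← hhom, ← hxu]

variable {ι : Type*} [Fintype ι]

/-- The symbol `ξ ↦ ⟨Gξ, ξ⟩` of the constant-coefficient operator `-div(G∇)`. -/
def divFormSymbol (G : ι → ι → ℝ) (ξ : EuclideanSpace ℝ ι) : ℝ :=
  ∑ i, ∑ j, G i j * ξ i * ξ j

theorem hasTemperateGrowth_divFormSymbol (G : ι → ι → ℝ) :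
    (divFormSymbol G).HasTemperateGrowth := by
  have hcoord (i : ι) : (fun ξ : EuclideanSpace ℝ ι ↦ ξ i).HasTemperateGrowth :=
    (EuclideanSpace.proj (𝕜 := ℝ) i).hasTemperateGrowth
  exact .sum fun i _ ↦ .sum fun j _ ↦ ((Function.HasTemperateGrowth.const _).mul (hcoord i)).mul
    (hcoord j)

theorem divFormSymbol_smul (G : ι → ι → ℝ) (a : ℝ) (ξ : EuclideanSpace ℝ ι) :
    divFormSymbol G (a • ξ) = a ^ 2 * divFormSymbol G ξ := by
  simp only [divFormSymbol, PiLp.smul_apply, smul_eq_mul, Finset.mul_sum]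
  congr! 2
  ring

theorem divFormSymbol_nonneg {G : ι → ι → ℝ} (hG : ∀ ξ, ξ ≠ 0 → 0 < divFormSymbol G ξ)
    (ξ : EuclideanSpace ℝ ι) : 0 ≤ divFormSymbol G ξ := by
  rcases eq_or_ne ξ 0 with rfl | hξ
  · simp [divFormSymbol]
  · exact (hG ξ hξ).le

theorem integral_euclideanSpace_eq_integral_pi {F : Type*} [NormedAddCommGroup F]
    [NormedSpace ℝ F] (φ : EuclideanSpace ℝ ι → F) :
    ∫ x, φ x = ∫ x : ι → ℝ, φ (WithLp.toLp 2 x) :=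
  ((EuclideanSpace.volume_preserving_symm_measurableEquiv_toLp ι).symm.integral_comp' φ).symm

theorem fourier_euclideanSpace_eq (f : EuclideanSpace ℝ ι → ℂ) (η : EuclideanSpace ℝ ι) :
    𝓕 f η = ∫ y : ι → ℝ,
      Complex.exp (-Complex.I * ((∑ i, y i * ((2 * Real.pi) • η) i : ℝ) : ℂ)) *
        f (WithLp.toLp 2 y) := by
  rw [Real.fourier_eq', integral_euclideanSpace_eq_integral_pi]
  congr! 2 with y
  simp only [smul_eq_mul, PiLp.inner_apply, RCLike.inner_apply, conj_trivial, PiLp.smul_apply]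
  congr 2
  push_cast [Finset.mul_sum, Finset.sum_mul]
  congr! 1
  ring

theorem fourierInv_euclideanSpace_eq (u : EuclideanSpace ℝ ι → ℂ) (x : EuclideanSpace ℝ ι) :
    𝓕⁻ (fun η ↦ u ((2 * Real.pi) • η)) x =
      ((2 * Real.pi) ^ Fintype.card ι : ℂ)⁻¹ * ∫ ξ : ι → ℝ,
        Complex.exp (Complex.I * ((∑ i, x i * ξ i : ℝ) : ℂ)) * u (WithLp.toLp 2 ξ) := by
  have hscale := Measure.integral_comp_smul_of_nonneg (volume : Measure (EuclideanSpace ℝ ι))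
    (fun ξ ↦ Complex.exp (Complex.I * ((∑ i, x i * ξ i : ℝ) : ℂ)) * u ξ)
    (2 * Real.pi) (hR := by positivity)
  rw [finrank_euclideanSpace, Complex.real_smul, integral_euclideanSpace_eq_integral_pi
    (fun ξ ↦ Complex.exp (Complex.I * ((∑ i, x i * ξ i : ℝ) : ℂ)) * u ξ)] at hscale
  push_cast at hscale ⊢
  rw [← hscale, Real.fourierInv_eq']
  congr! 2 with η
  simp only [smul_eq_mul, PiLp.inner_apply, RCLike.inner_apply, conj_trivial, PiLp.smul_apply]
  congr 2
  push_cast [Finset.mul_sum, Finset.sum_mul]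
  congr! 1
  ring

/-- The heat operator `e^{-tP}` of `P = -div(G∇)` on Schwartz functions. In the frequency variable
of Mathlib's Fourier transform, `P` is multiplication by its symbol at `2πη`. -/
noncomputable def divFormHeat (G : ι → ι → ℝ) (t : ℝ) :
    𝓢(EuclideanSpace ℝ ι, ℂ) →L[ℝ] 𝓢(EuclideanSpace ℝ ι, ℂ) :=
  expNegMultiplier ℂ fun η ↦ t * divFormSymbol G ((2 * Real.pi) • η)

theorem divFormHeat_apply {G : ι → ι → ℝ} (hG₀ : ∀ ξ, 0 ≤ divFormSymbol G ξ) {t : ℝ} (ht : 0 ≤ t)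
    (f : 𝓢(EuclideanSpace ℝ ι, ℂ)) (x : EuclideanSpace ℝ ι) :
    divFormHeat G t f x =
      ((2 * Real.pi) ^ Fintype.card ι : ℂ)⁻¹ * ∫ ξ : ι → ℝ,
        Complex.exp (Complex.I * ((∑ i, x i * ξ i : ℝ) : ℂ)) *
          Complex.exp (-((t * ∑ i, ∑ j, G i j * ξ i * ξ j : ℝ) : ℂ)) *
          ∫ y : ι → ℝ, Complex.exp (-Complex.I * ((∑ i, y i * ξ i : ℝ) : ℂ)) *
            f (WithLp.toLp 2 y) := by
  have hsymbol := hasTemperateGrowth_divFormSymbol G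
  have hscaled : (fun η ↦ t * divFormSymbol G ((2 * Real.pi) • η)).HasTemperateGrowth := by fun_prop
  simp only [mul_assoc (Complex.exp (Complex.I * _))]
  rw [divFormHeat, expNegMultiplier, SchwartzMap.fourierMultiplierCLM_apply,
    SchwartzMap.fourierInv_coe]
  refine Eq.trans ?_ (fourierInv_euclideanSpace_eq (fun ξ ↦
    Complex.exp (-((t * divFormSymbol G ξ : ℝ) : ℂ)) * ∫ y : ι → ℝ,
      Complex.exp (-Complex.I * ((∑ i, y i * ξ i : ℝ) : ℂ)) * f (WithLp.toLp 2 y)) x)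
  refine congrArg (fun u : EuclideanSpace ℝ ι → ℂ ↦ 𝓕⁻ u x) (funext fun η ↦ ?_)
  rw [SchwartzMap.smulLeftCLM_apply_apply
    (hasTemperateGrowth_exp_neg hscaled fun _ ↦ mul_nonneg ht (hG₀ _)), Complex.real_smul,
    SchwartzMap.fourier_coe, fourier_euclideanSpace_eq]
  push_cast
  rfl

theorem exists_norm_toL2_bracketMul_divFormHeat_bracketMul_le {G : ι → ι → ℝ}
    (hG : ∀ ξ, ξ ≠ 0 → 0 < divFormSymbol G ξ) {s₁ s₂ κ : ℝ}
    (hs₁ : s₁ ∈ Set.Icc (0 : ℝ) (Fintype.card ι / 2))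
    (hs₂ : s₂ ∈ Set.Icc (0 : ℝ) (Fintype.card ι / 2)) (hκ : 1 < κ) :
    ∃ C : ℝ, 0 ≤ C ∧ ∀ t : ℝ, 0 < t → ∀ f : 𝓢(EuclideanSpace ℝ ι, ℂ),
      ‖(bracketMul _ ℂ (-(κ * s₁)) (divFormHeat G t (bracketMul _ ℂ (-(κ * s₂)) f))).toLp 2‖ ≤
        C * t ^ (-(s₁ + s₂) / 2) * ‖f.toLp 2‖ := by
  have hsymbol := hasTemperateGrowth_divFormSymbol G
  obtain ⟨c, hc, hGc⟩ :=
    exists_pos_mul_norm_sq_le hsymbol.1.continuous (divFormSymbol_smul G) hG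
  rw [← finrank_euclideanSpace (𝕜 := ℝ) (ι := ι)] at hs₁ hs₂
  obtain ⟨C, hC₀, hC⟩ :=
    exists_norm_toL2_bracketMul_expNegMultiplier_bracketMul_le (H := ℂ) hs₁ hs₂ hκ
  refine ⟨C * ((2 * Real.pi) ^ 2 * c) ^ (-(s₁ + s₂) / 2), by positivity, fun t ht f ↦ ?_⟩
  have hcoercive (η : EuclideanSpace ℝ ι) :
      (2 * Real.pi) ^ 2 * c * t * ‖η‖ ^ 2 ≤ t * divFormSymbol G ((2 * Real.pi) • η) := by
    rw [divFormSymbol_smul]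
    have := mul_le_mul_of_nonneg_left (hGc η) (by positivity : 0 ≤ t * (2 * Real.pi) ^ 2)
    linarith
  rw [mul_assoc C, ← Real.mul_rpow (by positivity) ht.le]
  exact hC _ (by fun_prop) _ (by positivity) hcoercive f

end Coordinates

theorem stmt9_general {d : ℕ} (Gs : Fin d → Fin d → ℝ)
    (hGpos : ∀ ξ : Fin d → ℝ, ξ ≠ 0 → 0 < ∑ i, ∑ j, Gs i j * ξ i * ξ j)
    (b : ℝ) (hb : 0 < b)
    (s₁ s₂ κ : ℝ) (hs₁ : s₁ ∈ Set.Icc (0 : ℝ) ((d : ℝ) / 2))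
    (hs₂ : s₂ ∈ Set.Icc (0 : ℝ) ((d : ℝ) / 2)) (hκ : 1 < κ) :
    ∃ C : ℝ, 0 ≤ C ∧ ∀ t : ℝ, 0 < t → ∀ g : SchwartzMap (Fin d → ℝ) ℂ,
      Real.sqrt (∫ x : Fin d → ℝ,
          (1 + ∑ i, x i ^ 2) ^ (-(κ * s₁)) *
            ‖((2 * Real.pi) ^ d : ℂ)⁻¹ *
              ∫ ξ : Fin d → ℝ,
                Complex.exp (Complex.I * ((∑ i, x i * ξ i : ℝ) : ℂ)) *
                Complex.exp (-(((t / b) * ∑ i, ∑ j, Gs i j * ξ i * ξ j : ℝ) : ℂ)) *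
                ∫ y : Fin d → ℝ,
                  Complex.exp (-Complex.I * ((∑ i, y i * ξ i : ℝ) : ℂ)) *
                    ((((1 + ∑ i, y i ^ 2) ^ (-(κ * s₂) / 2) : ℝ) : ℂ) * g y)‖ ^ 2)
        ≤ C * t ^ (-(s₁ + s₂) / 2) * Real.sqrt (∫ x : Fin d → ℝ, ‖g x‖ ^ 2) := by
  have hG : ∀ ξ, ξ ≠ 0 → 0 < divFormSymbol Gs ξ := fun ξ hξ ↦ hGpos ξ.ofLp (by simpa using hξ)
  rw [← Fintype.card_fin d] at hs₁ hs₂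
  obtain ⟨C, hC₀, hC⟩ := exists_norm_toL2_bracketMul_divFormHeat_bracketMul_le hG hs₁ hs₂ hκ
  refine ⟨C * b⁻¹ ^ (-(s₁ + s₂) / 2), by positivity, fun t ht g ↦ ?_⟩
  have hdecay := hC (t / b) (by positivity)
    (SchwartzMap.compCLMOfContinuousLinearEquiv ℝ (EuclideanSpace.equiv (Fin d) ℝ) g)
  rw [div_eq_inv_mul t b, Real.mul_rpow (by positivity) ht.le, ← mul_assoc, ← div_eq_inv_mul,
    norm_toL2_bracketMul_eq_sqrt, norm_toL2_eq_sqrt, integral_euclideanSpace_eq_integral_pi,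
    integral_euclideanSpace_eq_integral_pi] at hdecay
  simp only [divFormHeat_apply (divFormSymbol_nonneg hG) (div_nonneg ht.le hb.le), bracketMul_apply,
    EuclideanSpace.real_norm_sq_eq, Fintype.card_fin] at hdecay
  exact hdecay

/-- Weighted decay for the constant-coefficient heat semigroup: for a positive definite
symmetric matrix `G*`, `b > 0`, `s₁, s₂ ∈ [0, d/2]` and `κ > 1`, there is `C ≥ 0` with
`‖⟨x⟩^{-κs₁} e^{-tP/b} ⟨x⟩^{-κs₂}‖_{L(L²)} ≤ C t^{-(s₁+s₂)/2}` for `t ≥ 1`, where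
`P = -div(G*∇)` acts via the Fourier transform as multiplication by `e^{-t⟨G*ξ,ξ⟩/b}`.
The operator bound is expressed by testing against Schwartz functions `g`. -/
theorem stmt9 {d : ℕ} (Gs : Fin d → Fin d → ℝ)
    (hGsym : ∀ i j, Gs i j = Gs j i)
    (hGpos : ∀ ξ : Fin d → ℝ, ξ ≠ 0 → 0 < ∑ i, ∑ j, Gs i j * ξ i * ξ j)
    (b : ℝ) (hb : 0 < b)
    (s₁ s₂ κ : ℝ) (hs₁ : s₁ ∈ Set.Icc (0 : ℝ) ((d : ℝ) / 2))
    (hs₂ : s₂ ∈ Set.Icc (0 : ℝ) ((d : ℝ) / 2)) (hκ : 1 < κ) :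
    ∃ C : ℝ, 0 ≤ C ∧ ∀ t : ℝ, 1 ≤ t → ∀ g : SchwartzMap (Fin d → ℝ) ℂ,
      Real.sqrt (∫ x : Fin d → ℝ,
          (1 + ∑ i, x i ^ 2) ^ (-(κ * s₁)) *
            ‖((2 * Real.pi) ^ d : ℂ)⁻¹ *
              ∫ ξ : Fin d → ℝ,
                Complex.exp (Complex.I * ((∑ i, x i * ξ i : ℝ) : ℂ)) *
                Complex.exp (-(((t / b) * ∑ i, ∑ j, Gs i j * ξ i * ξ j : ℝ) : ℂ)) *
                ∫ y : Fin d → ℝ,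
                  Complex.exp (-Complex.I * ((∑ i, y i * ξ i : ℝ) : ℂ)) *
                    ((((1 + ∑ i, y i ^ 2) ^ (-(κ * s₂) / 2) : ℝ) : ℂ) * g y)‖ ^ 2)
        ≤ C * t ^ (-(s₁ + s₂) / 2) * Real.sqrt (∫ x : Fin d → ℝ, ‖g x‖ ^ 2) := by
  obtain ⟨C, hC₀, hC⟩ := stmt9_general Gs hGpos b hb s₁ s₂ κ hs₁ hs₂ hκ
  exact ⟨C, hC₀, fun t ht ↦ hC t (one_pos.trans_le ht)⟩
end

section
/- (Heat-kernel time-derivative decay) With G*, b, P as above and s₁, s₂ ∈ [0,d/2], κ > 1, there exists C ≥ 0 such that for all t ≥ 1, ‖⟨x⟩^{−κ s₁} P e^{−tP/b} ⟨x⟩^{−κ s₂}‖_{L(L²(ℝ^d))} ≤ C t^{−1−(s₁+s₂)/2}. -/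
open MeasureTheory

/-! Diagonalizing `G*` reduces the symbol to `‖ξ‖² e^{-c‖ξ‖²}` with `c = t / b`; differentiating the
Fourier integral of a Gaussian in `c` bounds the convolution kernel of `P e^{-cP}` by
`M c^{-d/2-1} e^{-a|z|²/c}`. Put `s = θ d/2`: by Hölder's inequality the mass of
`e^{-a|x-y|²/c} ⟨y⟩^{-2κs}` is at most `(∫ e^{-a|z|²/c} dz)^{1-θ} (∫ ⟨y⟩^{-κd} dy)^θ`, which is a
multiple of `c^{d/2-s}`, uniformly in `x`. Schur's test, with one weight on each side of the kernel,
takes the geometric mean of these masses for `s₁` and `s₂`, and the powers of `c` add up to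
`-1-(s₁+s₂)/2`. -/

open Module (finrank)
open scoped ENNReal NNReal RealInnerProductSpace

noncomputable section

section SchurTest

variable {X Y : Type*} [MeasurableSpace X] [MeasurableSpace Y] {μ : Measure X} {ν : Measure Y}

theorem sq_lintegral_mul_le {f g : Y → ℝ≥0∞} (hf : AEMeasurable f ν) (hg : AEMeasurable g ν) :
    (∫⁻ y, f y * g y ∂ν) ^ 2 ≤ (∫⁻ y, f y ^ 2 ∂ν) * ∫⁻ y, g y ^ 2 ∂ν := by
  have h := ENNReal.lintegral_mul_le_Lp_mul_Lq ν .two_two hf hg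
  calc (∫⁻ y, f y * g y ∂ν) ^ 2
      ≤ ((∫⁻ y, f y ^ (2 : ℝ) ∂ν) ^ (1 / 2 : ℝ) * (∫⁻ y, g y ^ (2 : ℝ) ∂ν) ^ (1 / 2 : ℝ)) ^ 2 :=
        pow_le_pow_left' h 2
    _ = (∫⁻ y, f y ^ 2 ∂ν) * ∫⁻ y, g y ^ 2 ∂ν := by
        simp [mul_pow, ← ENNReal.rpow_mul_natCast]

theorem sq_lintegral_kernel_mul_le {k w g : Y → ℝ≥0∞} (hk : Measurable k) (hw : AEMeasurable w ν)
    (hg : AEMeasurable g ν) :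
    (∫⁻ y, k y * (w y * g y) ∂ν) ^ 2 ≤ (∫⁻ y, k y * w y ^ 2 ∂ν) * ∫⁻ y, k y * g y ^ 2 ∂ν := by
  have hdensity {φ : Y → ℝ≥0∞} (hφ : AEMeasurable φ ν) :
      ∫⁻ y, φ y ∂ν.withDensity k = ∫⁻ y, k y * φ y ∂ν :=
    lintegral_withDensity_eq_lintegral_mul₀ hk.aemeasurable hφ
  rw [← hdensity (hw.fun_mul hg), ← hdensity (hw.pow_const 2), ← hdensity (hg.pow_const 2)]
  have hac : ν.withDensity k ≪ ν := withDensity_absolutelyContinuous ν k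
  exact sq_lintegral_mul_le (hw.mono_ac hac) (hg.mono_ac hac)

theorem eLpNorm_two_sq {F : Type*} [NormedAddCommGroup F] (f : X → F) :
    eLpNorm f 2 μ ^ 2 = ∫⁻ x, ‖f x‖ₑ ^ 2 ∂μ := by
  simpa using eLpNorm_nnreal_pow_eq_lintegral (μ := μ) (f := f) (p := 2) two_ne_zero

theorem eLpNorm_two_le_of_schur [SFinite μ] [SFinite ν] {F G : Type*} [NormedAddCommGroup F]
    [NormedAddCommGroup G] {k : X → Y → ℝ≥0∞} {p : X → ℝ≥0∞} {w : Y → ℝ≥0∞} {f : X → F} {g : Y → G}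
    {A B : ℝ≥0∞} (hk : Measurable (Function.uncurry k)) (hp : Measurable p) (hw : AEMeasurable w ν)
    (hg : AEStronglyMeasurable g ν)
    (hf : ∀ x, ‖f x‖ₑ ≤ p x * ∫⁻ y, k x y * (w y * ‖g y‖ₑ) ∂ν)
    (hA : ∀ y, ∫⁻ x, k x y * p x ^ 2 ∂μ ≤ A) (hB : ∀ x, ∫⁻ y, k x y * w y ^ 2 ∂ν ≤ B) :
    eLpNorm f 2 μ ^ 2 ≤ A * B * eLpNorm g 2 ν ^ 2 := by
  have hmeas : AEMeasurable (Function.uncurry fun x y ↦ k x y * p x ^ 2 * ‖g y‖ₑ ^ 2)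
      (μ.prod ν) :=
    (hk.mul ((hp.comp measurable_fst).pow_const 2)).aemeasurable.mul (hg.enorm.comp_snd.pow_const 2)
  have hpointwise : ∀ x, ‖f x‖ₑ ^ 2 ≤ B * ∫⁻ y, k x y * p x ^ 2 * ‖g y‖ₑ ^ 2 ∂ν := fun x ↦
    calc ‖f x‖ₑ ^ 2 ≤ p x ^ 2 * (∫⁻ y, k x y * (w y * ‖g y‖ₑ) ∂ν) ^ 2 := by
          rw [← mul_pow]
          exact pow_le_pow_left' (hf x) 2
      _ ≤ p x ^ 2 * (B * ∫⁻ y, k x y * ‖g y‖ₑ ^ 2 ∂ν) := by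
          gcongr
          exact (sq_lintegral_kernel_mul_le hk.of_uncurry_left hw hg.enorm).trans
            (mul_le_mul_left (hB x) _)
      _ = B * ∫⁻ y, k x y * p x ^ 2 * ‖g y‖ₑ ^ 2 ∂ν := by
          rw [mul_left_comm, ← lintegral_const_mul'' (p x ^ 2)
            (by exact hk.of_uncurry_left.aemeasurable.mul (hg.enorm.pow_const 2))]
          simp only [mul_left_comm, mul_assoc]
  calc eLpNorm f 2 μ ^ 2 = ∫⁻ x, ‖f x‖ₑ ^ 2 ∂μ := eLpNorm_two_sq f
    _ ≤ ∫⁻ x, B * ∫⁻ y, k x y * p x ^ 2 * ‖g y‖ₑ ^ 2 ∂ν ∂μ := lintegral_mono hpointwise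
    _ = B * ∫⁻ y, (∫⁻ x, k x y * p x ^ 2 ∂μ) * ‖g y‖ₑ ^ 2 ∂ν := by
        rw [lintegral_const_mul'' B (by exact hmeas.lintegral_prod_right'),
          lintegral_lintegral_swap hmeas]
        congr 2 with y
        exact lintegral_mul_const _ (hk.of_uncurry_right.mul (hp.pow_const 2))
    _ ≤ B * ∫⁻ y, A * ‖g y‖ₑ ^ 2 ∂ν := by
        gcongr with y
        exact hA y
    _ = A * B * eLpNorm g 2 ν ^ 2 := by
        rw [lintegral_const_mul'' _ (hg.enorm.pow_const 2), eLpNorm_two_sq]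
        ring

theorem sqrt_integral_sq_norm_le_of_eLpNorm_two_le {F G : Type*} [NormedAddCommGroup F]
    [NormedAddCommGroup G] {f : X → F} {g : Y → G} {C : ℝ} (hg : MemLp g 2 ν) (hC : 0 ≤ C)
    (h : eLpNorm f 2 μ ^ 2 ≤ ENNReal.ofReal C ^ 2 * eLpNorm g 2 ν ^ 2) :
    √(∫ x, ‖f x‖ ^ 2 ∂μ) ≤ C * √(∫ y, ‖g y‖ ^ 2 ∂ν) := by
  have hgsq : eLpNorm g 2 ν ^ 2 = ENNReal.ofReal (∫ y, ‖g y‖ ^ 2 ∂ν) := by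
    rw [eLpNorm_two_sq, ofReal_integral_eq_lintegral_ofReal
      (by simpa using hg.integrable_norm_pow two_ne_zero) (.of_forall fun _ ↦ sq_nonneg _)]
    simp [ENNReal.ofReal_pow]
  have hfsq : ENNReal.ofReal (∫ x, ‖f x‖ ^ 2 ∂μ) ≤ eLpNorm f 2 μ ^ 2 := by
    rw [eLpNorm_two_sq]
    refine (Real.ofReal_le_enorm _).trans ((enorm_integral_le_lintegral_enorm _).trans_eq ?_)
    simp only [enorm_pow, enorm_norm]
  have hsq : ∫ x, ‖f x‖ ^ 2 ∂μ ≤ C ^ 2 * ∫ y, ‖g y‖ ^ 2 ∂ν := by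
    rw [← ENNReal.ofReal_le_ofReal_iff (by positivity), ENNReal.ofReal_mul (sq_nonneg C),
      ENNReal.ofReal_pow hC, ← hgsq]
    exact hfsq.trans h
  calc √(∫ x, ‖f x‖ ^ 2 ∂μ) ≤ √(C ^ 2 * ∫ y, ‖g y‖ ^ 2 ∂ν) := Real.sqrt_le_sqrt hsq
    _ = C * √(∫ y, ‖g y‖ ^ 2 ∂ν) := by rw [Real.sqrt_mul (sq_nonneg C), Real.sqrt_sq hC]

end SchurTest

/-- The symbol `q e^{-cq}` of the operator `P e^{-cP} = -d/dc e^{-cP}` when `P` has symbol `q`. -/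
def heatDerivSymbol {X : Type*} (q : X → ℝ) (c : ℝ) (ξ : X) : ℂ :=
  (q ξ : ℂ) * Complex.exp (-((c * q ξ : ℝ) : ℂ))

section Symbol

variable {X : Type*} {q : X → ℝ}

theorem norm_heatDerivSymbol (hq : ∀ ξ, 0 ≤ q ξ) (c : ℝ) (ξ : X) :
    ‖heatDerivSymbol q c ξ‖ = q ξ * Real.exp (-(c * q ξ)) := by
  rw [heatDerivSymbol, norm_mul, Complex.norm_of_nonneg (hq ξ), ← Complex.ofReal_neg,
    Complex.norm_exp_ofReal]

theorem mul_exp_neg_mul_le_exp_neg_mul {a c x : ℝ} (hac : a < c) :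
    x * Real.exp (-(c * x)) ≤ (c - a)⁻¹ * Real.exp (-(a * x)) := by
  have hδ : 0 < c - a := sub_pos.2 hac
  have hlin : (c - a) * x * Real.exp (-((c - a) * x)) ≤ 1 :=
    (Real.mul_exp_neg_le_exp_neg_one _).trans (Real.exp_le_one_iff.2 (by norm_num))
  calc x * Real.exp (-(c * x))
      = (c - a)⁻¹ * ((c - a) * x * Real.exp (-((c - a) * x))) * Real.exp (-(a * x)) := by
        rw [show -(c * x) = -((c - a) * x) + -(a * x) by ring, Real.exp_add]
        field_simp
    _ ≤ (c - a)⁻¹ * 1 * Real.exp (-(a * x)) := by gcongr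
    _ = (c - a)⁻¹ * Real.exp (-(a * x)) := by rw [mul_one]

theorem hasDerivAt_integral_mul_cexp_neg_mul [MeasurableSpace X] {μ : Measure X} {f : X → ℂ}
    {a c : ℝ} (hf : AEStronglyMeasurable f μ) (hqm : Measurable q) (hq : ∀ ξ, 0 ≤ q ξ)
    (hint : Integrable (fun ξ ↦ f ξ * Complex.exp (-((a * q ξ : ℝ) : ℂ))) μ) (hac : a < c) :
    HasDerivAt (fun s : ℝ ↦ ∫ ξ, f ξ * Complex.exp (-((s * q ξ : ℝ) : ℂ)) ∂μ)
      (-∫ ξ, f ξ * heatDerivSymbol q c ξ ∂μ) c := by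
  have hexp (s : ℝ) (ξ : X) :
      ‖f ξ * Complex.exp (-((s * q ξ : ℝ) : ℂ))‖ = ‖f ξ‖ * Real.exp (-(s * q ξ)) := by
    rw [norm_mul, ← Complex.ofReal_neg, Complex.norm_exp_ofReal]
  have hmeas (s : ℝ) : AEStronglyMeasurable
      (fun ξ ↦ f ξ * Complex.exp (-((s * q ξ : ℝ) : ℂ))) μ :=
    hf.mul (by fun_prop)
  obtain ⟨e, hae, hec⟩ := exists_between hac
  rw [← integral_neg]
  refine (hasDerivAt_integral_of_dominated_loc_of_deriv_le (𝕜 := ℝ)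
    (F' := fun s ξ ↦ -(f ξ * heatDerivSymbol q s ξ))
    (bound := fun ξ ↦ (e - a)⁻¹ * ‖f ξ * Complex.exp (-((a * q ξ : ℝ) : ℂ))‖)
    (Ioi_mem_nhds hec) (.of_forall hmeas) ?_ ?_ ?_ (hint.norm.const_mul _) ?_).2
  · refine hint.mono (hmeas c) (.of_forall fun ξ ↦ ?_)
    rw [hexp, hexp]
    have := hq ξ
    gcongr
  · unfold heatDerivSymbol
    exact (hf.mul (by fun_prop)).neg
  · refine .of_forall fun ξ s (hs : e < s) ↦ ?_
    rw [norm_neg, norm_mul, norm_heatDerivSymbol hq, hexp, mul_left_comm (e - a)⁻¹]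
    refine mul_le_mul_of_nonneg_left ?_ (norm_nonneg _)
    have := hq ξ
    calc q ξ * Real.exp (-(s * q ξ)) ≤ q ξ * Real.exp (-(e * q ξ)) := by gcongr
      _ ≤ (e - a)⁻¹ * Real.exp (-(a * q ξ)) := mul_exp_neg_mul_le_exp_neg_mul hae
  · refine .of_forall fun ξ s _ ↦ ?_
    convert! ((((hasDerivAt_id s).mul_const (q ξ)).ofReal_comp.neg.cexp).const_mul (f ξ)) using 1
    simp only [heatDerivSymbol, id_eq, one_mul, Pi.neg_apply]
    ring

end Symbol

section JapaneseBracket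

variable {E : Type*} [SeminormedAddCommGroup E]

/-- The Japanese bracket `⟨x⟩ = (1 + |x|²)^{1/2}`, whose negative powers are the weights. -/
def japaneseBracket (x : E) : ℝ := √(1 + ‖x‖ ^ 2)

theorem japaneseBracket_pos (x : E) : 0 < japaneseBracket x :=
  Real.sqrt_pos.2 (by positivity)

theorem japaneseBracket_rpow (x : E) (r : ℝ) : japaneseBracket x ^ r = (1 + ‖x‖ ^ 2) ^ (r / 2) := by
  rw [japaneseBracket, Real.sqrt_eq_rpow, ← Real.rpow_mul (by positivity), one_div_mul_eq_div]

theorem continuous_japaneseBracket_rpow (r : ℝ) : Continuous fun x : E ↦ japaneseBracket x ^ r := by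
  refine Continuous.rpow_const ?_ fun x ↦ .inl (japaneseBracket_pos x).ne'
  unfold japaneseBracket
  fun_prop

theorem japaneseBracket_rpow_neg_le_one {r : ℝ} (hr : 0 ≤ r) (x : E) :
    japaneseBracket x ^ (-r) ≤ 1 :=
  Real.rpow_le_one_of_one_le_of_nonpos (Real.one_le_sqrt.2 (by simp)) (neg_nonpos.2 hr)

theorem sq_norm_japaneseBracket_rpow_mul (x : E) (r : ℝ) (z : ℂ) :
    ‖((japaneseBracket x ^ r : ℝ) : ℂ) * z‖ ^ 2 = (1 + ‖x‖ ^ 2) ^ r * ‖z‖ ^ 2 := by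
  rw [norm_mul, mul_pow, Complex.norm_real, Real.norm_eq_abs, sq_abs, japaneseBracket_rpow,
    ← Real.rpow_mul_natCast (by positivity), Nat.cast_two, div_mul_cancel₀ r two_ne_zero]

end JapaneseBracket

variable {E F : Type*} [NormedAddCommGroup E] [InnerProductSpace ℝ E] [FiniteDimensional ℝ E]
  [NormedAddCommGroup F] [InnerProductSpace ℝ F] [FiniteDimensional ℝ F]

theorem norm_le_mul_norm_adjoint_symm (T : E ≃L[ℝ] F) (z : E) :
    ‖z‖ ≤ ‖(T : E →L[ℝ] F)‖ * ‖ContinuousLinearMap.adjoint (T.symm : F →L[ℝ] E) z‖ := by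
  have hz : z = ContinuousLinearMap.adjoint (T : E →L[ℝ] F)
      (ContinuousLinearMap.adjoint (T.symm : F →L[ℝ] E) z) :=
    ext_inner_right ℝ fun v ↦ by simp only [ContinuousLinearMap.adjoint_inner_left,
      ContinuousLinearEquiv.coe_coe, T.symm_apply_apply]
  conv_lhs => rw [hz]
  refine (ContinuousLinearMap.le_opNorm _ _).trans_eq ?_
  rw [LinearIsometryEquiv.norm_map]

theorem exists_continuousLinearEquiv_eq_sq_norm {Q : QuadraticForm ℝ E} (hQ : Q.PosDef) :
    ∃ T : E ≃L[ℝ] EuclideanSpace ℝ (Fin (finrank ℝ E)), ∀ ξ, Q ξ = ‖T ξ‖ ^ 2 := by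
  obtain ⟨w, ⟨e⟩⟩ := QuadraticForm.equivalent_signType_weighted_sum_squared Q
  have hw (i : Fin (finrank ℝ E)) : (w i : ℝ) = 1 := by
    have hpos := hQ (e.symm (Pi.single i 1)) (by simp)
    rw [QuadraticMap.IsometryEquiv.map_app, QuadraticMap.weightedSumSquares_apply,
      Finset.sum_eq_single i (by simp +contextual) (by simp)] at hpos
    revert hpos
    cases w i <;> norm_num
  refine ⟨(e.toLinearEquiv.trans (WithLp.linearEquiv 2 ℝ _).symm).toContinuousLinearEquiv,
    fun ξ ↦ ?_⟩
  rw [← e.map_app, QuadraticMap.weightedSumSquares_apply, EuclideanSpace.real_norm_sq_eq]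
  simp [hw, sq]

variable [MeasurableSpace E] [BorelSpace E] [MeasurableSpace F] [BorelSpace F]

section FourierMultiplier

/-- The operator `m(D)` with symbol `m`, in the normalization
`û(ξ) = ∫ e^{-i⟨y, ξ⟩} u(y) dy` of the Fourier transform. -/
def fourierMultiplier (m u : E → ℂ) (x : E) : ℂ :=
  ((2 * Real.pi) ^ finrank ℝ E : ℂ)⁻¹ * ∫ ξ : E, Complex.exp (Complex.I * (⟪x, ξ⟫ : ℝ)) * m ξ *
    ∫ y : E, Complex.exp (-Complex.I * (⟪y, ξ⟫ : ℝ)) * u y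

/-- The convolution kernel of `m(D)`, i.e. the inverse Fourier transform of the symbol `m`. -/
def multiplierKernel (m : E → ℂ) (z : E) : ℂ :=
  ((2 * Real.pi) ^ finrank ℝ E : ℂ)⁻¹ * ∫ ξ : E, Complex.exp (Complex.I * (⟪z, ξ⟫ : ℝ)) * m ξ

theorem fourierMultiplier_eq_integral_multiplierKernel {m u : E → ℂ} (hm : Integrable m)
    (hu : Integrable u) (x : E) :
    fourierMultiplier m u x = ∫ y : E, multiplierKernel m (x - y) * u y := by
  have hint : Integrable (Function.uncurry fun ξ y : E ↦
      Complex.exp (Complex.I * (⟪x - y, ξ⟫ : ℝ)) * (m ξ * u y)) (volume.prod volume) :=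
    (hm.mul_prod hu).bdd_mul (c := 1)
      (f := fun p : E × E ↦ Complex.exp (Complex.I * (⟪x - p.2, p.1⟫ : ℝ)))
      (Continuous.aestronglyMeasurable (by fun_prop))
      (.of_forall fun p ↦ by rw [mul_comm, Complex.norm_exp_ofReal_mul_I])
  have hphase (ξ y : E) : Complex.exp (Complex.I * (⟪x - y, ξ⟫ : ℝ)) =
      Complex.exp (Complex.I * (⟪x, ξ⟫ : ℝ)) * Complex.exp (-Complex.I * (⟪y, ξ⟫ : ℝ)) := by
    rw [← Complex.exp_add, inner_sub_left, Complex.ofReal_sub]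
    ring_nf
  simp only [fourierMultiplier, multiplierKernel, mul_assoc, integral_const_mul]
  congr 1
  calc _ = ∫ ξ : E, ∫ y : E, Complex.exp (Complex.I * (⟪x - y, ξ⟫ : ℝ)) * (m ξ * u y) := by
        simp only [hphase, ← integral_const_mul, mul_assoc, mul_left_comm (m _)]
    _ = ∫ y : E, (∫ ξ : E, Complex.exp (Complex.I * (⟪x - y, ξ⟫ : ℝ)) * m ξ) * u y := by
        rw [integral_integral_swap hint]
        simp only [← mul_assoc, integral_mul_const]

variable (T : E ≃L[ℝ] F)

theorem exists_map_volume_eq_smul : ∃ r : ℝ≥0, volume.map T = r • (volume : Measure F) :=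
  ⟨_, Measure.isAddLeftInvariant_eq_smul _ _⟩

theorem integrable_comp_continuousLinearEquiv {m : F → ℂ} (hm : Integrable m) :
    Integrable fun ξ ↦ m (T ξ) := by
  obtain ⟨r, hr⟩ := exists_map_volume_eq_smul T
  refine (hr ▸ hm.smul_measure_nnreal : Integrable m (volume.map T)).comp_measurable ?_
  fun_prop

theorem exists_multiplierKernel_comp_eq_smul :
    ∃ r : ℝ≥0, ∀ (m : F → ℂ) (z : E), multiplierKernel (fun ξ ↦ m (T ξ)) z =
      r • multiplierKernel m (ContinuousLinearMap.adjoint (T.symm : F →L[ℝ] E) z) := by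
  obtain ⟨r, hr⟩ := exists_map_volume_eq_smul T
  refine ⟨r, fun m z ↦ ?_⟩
  have hinner (ξ : E) : (⟪z, ξ⟫ : ℝ) =
      ⟪ContinuousLinearMap.adjoint (T.symm : F →L[ℝ] E) z, T ξ⟫ := by
    rw [ContinuousLinearMap.adjoint_inner_left, ContinuousLinearEquiv.coe_coe, T.symm_apply_apply]
  simp only [multiplierKernel, hinner, T.toLinearEquiv.finrank_eq]
  rw [← mul_smul_comm, ← integral_smul_nnreal_measure, ← hr,
    ← ContinuousLinearEquiv.coe_toHomeomorph, T.toHomeomorph.measurableEmbedding.integral_map]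

end FourierMultiplier

section Gaussian

theorem integrable_exp_neg_mul_sq_norm {c : ℝ} (hc : 0 < c) :
    Integrable fun ξ : E ↦ Real.exp (-(c * ‖ξ‖ ^ 2)) := by
  have h :=
    (GaussianFourier.integrable_cexp_neg_mul_sq_norm_add (V := E) (b := c) (by simpa) 0 0).norm
  simpa [Complex.norm_exp, ← Complex.ofReal_pow] using h

theorem integral_phase_mul_gaussian {c : ℝ} (hc : 0 < c) (w : E) :
    ∫ ξ : E, Complex.exp (Complex.I * (⟪w, ξ⟫ : ℝ)) * Complex.exp (-((c * ‖ξ‖ ^ 2 : ℝ) : ℂ)) =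
      ((Real.pi ^ ((finrank ℝ E : ℝ) / 2) * (c ^ (-((finrank ℝ E : ℝ) / 2)) *
        Real.exp (-(‖w‖ ^ 2 / 4 * c⁻¹))) : ℝ) : ℂ) := by
  have h :=
    GaussianFourier.integral_cexp_neg_mul_sq_norm_add (V := E) (b := c) (by simpa) Complex.I w
  have hpow : ((Real.pi : ℂ) / c) ^ ((finrank ℝ E : ℂ) / 2) =
      ((Real.pi ^ ((finrank ℝ E : ℝ) / 2) * c ^ (-((finrank ℝ E : ℝ) / 2)) : ℝ) : ℂ) := by
    rw [Real.rpow_neg hc.le, ← div_eq_mul_inv, ← Real.div_rpow Real.pi_pos.le hc.le,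
      Complex.ofReal_cpow (by positivity)]
    simp
  rw [← mul_assoc, Complex.ofReal_mul, Complex.ofReal_exp, ← hpow]
  convert h using 1
  · refine integral_congr_ae (.of_forall fun ξ ↦ ?_)
    simp only [← Complex.exp_add]
    congr 1
    push_cast
    ring
  · congr 2
    push_cast
    rw [Complex.I_sq]
    field_simp

theorem integral_phase_mul_heatDerivSymbol {c : ℝ} (hc : 0 < c) (w : E) :
    ∫ ξ : E, Complex.exp (Complex.I * (⟪w, ξ⟫ : ℝ)) * heatDerivSymbol (fun ξ : E ↦ ‖ξ‖ ^ 2) c ξ =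
      ((Real.pi ^ ((finrank ℝ E : ℝ) / 2) * c ^ (-((finrank ℝ E : ℝ) / 2) - 1) *
        (((finrank ℝ E : ℝ) / 2 - ‖w‖ ^ 2 / 4 * c⁻¹) *
          Real.exp (-(‖w‖ ^ 2 / 4 * c⁻¹))) : ℝ) : ℂ) := by
  set p : ℝ := (finrank ℝ E : ℝ) / 2
  have hgaussian : Integrable fun ξ : E ↦ Complex.exp (Complex.I * (⟪w, ξ⟫ : ℝ)) *
      Complex.exp (-((c / 2 * ‖ξ‖ ^ 2 : ℝ) : ℂ)) := by
    refine (integrable_exp_neg_mul_sq_norm (half_pos hc)).mono'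
      (Continuous.aestronglyMeasurable (by fun_prop)) (.of_forall fun ξ ↦ le_of_eq ?_)
    rw [norm_mul, mul_comm Complex.I, Complex.norm_exp_ofReal_mul_I, one_mul, ← Complex.ofReal_neg,
      Complex.norm_exp_ofReal]
  have hderiv := hasDerivAt_integral_mul_cexp_neg_mul (by fun_prop) (by fun_prop)
    (fun ξ ↦ sq_nonneg ‖ξ‖) hgaussian (half_lt_self hc)
  have hclosed : HasDerivAt (fun s : ℝ ↦
      ((Real.pi ^ p * (s ^ (-p) * Real.exp (-(‖w‖ ^ 2 / 4 * s⁻¹))) : ℝ) : ℂ)) _ c :=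
    (((Real.hasDerivAt_rpow_const (p := -p) (.inl hc.ne')).mul
      (((hasDerivAt_inv hc.ne').const_mul (‖w‖ ^ 2 / 4)).neg.exp)).const_mul _).ofReal_comp
  have heq := hderiv.unique (hclosed.congr_of_eventuallyEq
    (Filter.eventuallyEq_of_mem (Ioi_mem_nhds hc) fun s hs ↦ integral_phase_mul_gaussian hs w))
  rw [neg_eq_iff_eq_neg, ← Complex.ofReal_neg] at heq
  rw [heq]
  have hpow : c ^ (-p) = c ^ (-p - 1) * c := by
    rw [← Real.rpow_add_one hc.ne', sub_add_cancel]
  simp only [hpow, Pi.neg_apply]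
  congr 1
  field_simp
  ring

theorem abs_sub_mul_exp_neg_le {p u : ℝ} (hp : 0 ≤ p) (hu : 0 ≤ u) :
    |p - u| * Real.exp (-u) ≤ (p + 2) * Real.exp (-(u / 2)) := by
  have hlin : |p - u| ≤ (p + 2) * Real.exp (u / 2) := by
    have := Real.add_one_le_exp (u / 2)
    rw [abs_le]
    constructor <;> nlinarith
  calc |p - u| * Real.exp (-u) ≤ (p + 2) * Real.exp (u / 2) * Real.exp (-u) := by gcongr
    _ = (p + 2) * Real.exp (-(u / 2)) := by
      rw [mul_assoc, ← Real.exp_add]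
      ring_nf

theorem norm_multiplierKernel_heatDerivSymbol_sq_norm_le {c : ℝ} (hc : 0 < c) (w : E) :
    ‖multiplierKernel (heatDerivSymbol (fun ξ : E ↦ ‖ξ‖ ^ 2) c) w‖ ≤
      ‖((2 * Real.pi) ^ finrank ℝ E : ℂ)⁻¹‖ * (Real.pi ^ ((finrank ℝ E : ℝ) / 2) *
        c ^ (-((finrank ℝ E : ℝ) / 2) - 1) *
          (((finrank ℝ E : ℝ) / 2 + 2) * Real.exp (-(‖w‖ ^ 2 / 4 * c⁻¹ / 2)))) := by
  rw [multiplierKernel, norm_mul, integral_phase_mul_heatDerivSymbol hc, Complex.norm_real,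
    Real.norm_eq_abs, abs_mul, abs_of_nonneg (a := _ * _) (by positivity), abs_mul, Real.abs_exp]
  exact mul_le_mul_of_nonneg_left (mul_le_mul_of_nonneg_left
    (abs_sub_mul_exp_neg_le (by positivity) (by positivity)) (by positivity)) (norm_nonneg _)

end Gaussian

section WeightedGaussian

theorem integrable_japaneseBracket_rpow_neg {κ : ℝ} (hκ : 1 < κ) :
    Integrable fun x : E ↦ japaneseBracket x ^ (-(κ * finrank ℝ E)) := by
  rcases Nat.eq_zero_or_pos (finrank ℝ E) with hE | hE
  · have : Subsingleton E := Module.finrank_zero_iff.1 hE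
    exact (continuous_japaneseBracket_rpow _).integrable_of_hasCompactSupport
      (.of_compactSpace _)
  · simp only [japaneseBracket_rpow]
    exact integrable_rpow_neg_one_add_norm_sq
      (lt_mul_of_one_lt_left (Nat.cast_pos.2 hE) hκ)

theorem lintegral_mul_rpow_le {X : Type*} [MeasurableSpace X] {μ : Measure X} {f g : X → ℝ≥0∞}
    {θ : ℝ} (hf : AEMeasurable f μ) (hg : AEMeasurable g μ) (hf1 : ∀ x, f x ≤ 1)
    (hθ : θ ∈ Set.Icc (0 : ℝ) 1) :
    ∫⁻ x, f x * g x ^ θ ∂μ ≤ (∫⁻ x, f x ∂μ) ^ (1 - θ) * (∫⁻ x, g x ∂μ) ^ θ := by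
  refine (lintegral_mono fun x ↦ mul_le_mul_left ?_ _).trans
    (ENNReal.lintegral_mul_norm_pow_le hf hg (sub_nonneg.2 hθ.2) hθ.1 (sub_add_cancel 1 θ))
  simpa using ENNReal.rpow_le_rpow_of_exponent_ge (hf1 x) (sub_le_self 1 hθ.1)

theorem lintegral_exp_neg_mul_sq_norm_sub {a : ℝ} (ha : 0 < a) (x : E) :
    ∫⁻ y : E, ENNReal.ofReal (Real.exp (-(a * ‖x - y‖ ^ 2))) =
      ENNReal.ofReal ((Real.pi / a) ^ ((finrank ℝ E : ℝ) / 2)) := by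
  rw [lintegral_sub_left_eq_self (fun z : E ↦ ENNReal.ofReal (Real.exp (-(a * ‖z‖ ^ 2)))) x,
    ← ofReal_integral_eq_lintegral_ofReal (integrable_exp_neg_mul_sq_norm ha)
      (.of_forall fun _ ↦ (Real.exp_pos _).le)]
  simp only [← neg_mul, GaussianFourier.integral_rexp_neg_mul_sq_norm ha]

theorem exists_lintegral_gaussian_mul_japaneseBracket_le {a s κ : ℝ} (ha : 0 < a)
    (hs : s ∈ Set.Icc (0 : ℝ) ((finrank ℝ E : ℝ) / 2)) (hκ : 1 < κ) :
    ∃ C : ℝ, 0 ≤ C ∧ ∀ c : ℝ, 0 < c → ∀ x : E,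
      ∫⁻ y : E, ENNReal.ofReal (Real.exp (-(a / c * ‖x - y‖ ^ 2))) *
        ENNReal.ofReal (japaneseBracket y ^ (-(κ * s))) ^ 2 ≤
        ENNReal.ofReal (C * c ^ ((finrank ℝ E : ℝ) / 2 - s)) := by
  set p : ℝ := (finrank ℝ E : ℝ) / 2 with hp
  obtain ⟨θ, hθ, hsθ⟩ : ∃ θ ∈ Set.Icc (0 : ℝ) 1, s = θ * p :=
    have hp0 : 0 ≤ p := hs.1.trans hs.2
    ⟨s / p, ⟨div_nonneg hs.1 hp0, div_le_one_of_le₀ hs.2 hp0⟩,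
      (div_mul_cancel_of_imp fun h ↦ le_antisymm (hs.2.trans_eq h) hs.1).symm⟩
  have hweight (y : E) : ENNReal.ofReal (japaneseBracket y ^ (-(κ * s))) ^ 2 =
      ENNReal.ofReal (japaneseBracket y ^ (-(κ * finrank ℝ E))) ^ θ := by
    have := japaneseBracket_pos y
    rw [← ENNReal.ofReal_pow (by positivity), ENNReal.ofReal_rpow_of_nonneg (by positivity) hθ.1,
      ← Real.rpow_mul_natCast this.le, ← Real.rpow_mul this.le, hsθ, hp]
    congr 2
    push_cast
    ring
  have hintegrable := integrable_japaneseBracket_rpow_neg (E := E) hκ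
  set W : ℝ := ∫ y : E, japaneseBracket y ^ (-(κ * finrank ℝ E))
  have hnonneg (y : E) : 0 ≤ japaneseBracket y ^ (-(κ * finrank ℝ E)) :=
    (Real.rpow_pos_of_pos (japaneseBracket_pos y) _).le
  have hW : 0 ≤ W := integral_nonneg hnonneg
  refine ⟨(Real.pi / a) ^ (p * (1 - θ)) * W ^ θ, by positivity, fun c hc x ↦ ?_⟩
  have hac : 0 < a / c := by positivity
  simp only [hweight]
  calc _ ≤ (∫⁻ y : E, ENNReal.ofReal (Real.exp (-(a / c * ‖x - y‖ ^ 2)))) ^ (1 - θ) *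
        (∫⁻ y : E, ENNReal.ofReal (japaneseBracket y ^ (-(κ * finrank ℝ E)))) ^ θ :=
      lintegral_mul_rpow_le (by fun_prop) hintegrable.1.aemeasurable.ennreal_ofReal (fun y ↦
        ENNReal.ofReal_le_one.2 (Real.exp_le_one_iff.2 (neg_nonpos.2 (by positivity)))) hθ
    _ = ENNReal.ofReal (((Real.pi / (a / c)) ^ p) ^ (1 - θ) * W ^ θ) := by
      rw [lintegral_exp_neg_mul_sq_norm_sub hac, ← ofReal_integral_eq_lintegral_ofReal hintegrable
        (.of_forall hnonneg), ENNReal.ofReal_rpow_of_nonneg (by positivity) (sub_nonneg.2 hθ.2),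
        ENNReal.ofReal_rpow_of_nonneg hW hθ.1, ← ENNReal.ofReal_mul (by positivity)]
    _ = ENNReal.ofReal ((Real.pi / a) ^ (p * (1 - θ)) * W ^ θ * c ^ (p - s)) := by
      rw [← Real.rpow_mul (by positivity), div_div_eq_mul_div, mul_div_right_comm,
        Real.mul_rpow (by positivity) hc.le, hsθ, mul_right_comm]
      ring_nf

theorem exists_eLpNorm_two_le_of_gaussian_kernel {a s₁ s₂ κ : ℝ} (ha : 0 < a)
    (hs₁ : s₁ ∈ Set.Icc (0 : ℝ) ((finrank ℝ E : ℝ) / 2))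
    (hs₂ : s₂ ∈ Set.Icc (0 : ℝ) ((finrank ℝ E : ℝ) / 2)) (hκ : 1 < κ) :
    ∃ C : ℝ, 0 ≤ C ∧ ∀ c K : ℝ, 0 < c → 0 ≤ K → ∀ f g : E → ℂ, AEStronglyMeasurable g →
      (∀ x, ‖f x‖ₑ ≤ ENNReal.ofReal (japaneseBracket x ^ (-(κ * s₁))) *
        ∫⁻ y, ENNReal.ofReal (K * Real.exp (-(a / c * ‖x - y‖ ^ 2))) *
          (ENNReal.ofReal (japaneseBracket y ^ (-(κ * s₂))) * ‖g y‖ₑ)) →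
      eLpNorm f 2 ^ 2 ≤
        ENNReal.ofReal (C * (K * c ^ ((finrank ℝ E : ℝ) / 2 - (s₁ + s₂) / 2))) ^ 2 *
          eLpNorm g 2 ^ 2 := by
  obtain ⟨C₁, hC₁, h₁⟩ := exists_lintegral_gaussian_mul_japaneseBracket_le (E := E) ha hs₁ hκ
  obtain ⟨C₂, hC₂, h₂⟩ := exists_lintegral_gaussian_mul_japaneseBracket_le (E := E) ha hs₂ hκ
  set p : ℝ := (finrank ℝ E : ℝ) / 2
  refine ⟨√(C₁ * C₂), by positivity, fun c K hc hK f g hg hf ↦ ?_⟩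
  have hmeas (r : ℝ) : Measurable fun x : E ↦ ENNReal.ofReal (japaneseBracket x ^ r) :=
    (continuous_japaneseBracket_rpow r).measurable.ennreal_ofReal
  have hmass {s C : ℝ} (h : ∀ c : ℝ, 0 < c → ∀ x : E,
      ∫⁻ y : E, ENNReal.ofReal (Real.exp (-(a / c * ‖x - y‖ ^ 2))) *
        ENNReal.ofReal (japaneseBracket y ^ (-(κ * s))) ^ 2 ≤ ENNReal.ofReal (C * c ^ (p - s)))
      (x : E) : ∫⁻ y : E, ENNReal.ofReal (K * Real.exp (-(a / c * ‖x - y‖ ^ 2))) *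
        ENNReal.ofReal (japaneseBracket y ^ (-(κ * s))) ^ 2 ≤
          ENNReal.ofReal (K * (C * c ^ (p - s))) := by
    simp only [ENNReal.ofReal_mul hK, mul_assoc]
    rw [lintegral_const_mul' _ _ ENNReal.ofReal_ne_top]
    exact mul_le_mul_right (h c hc x) _
  have hschur := eLpNorm_two_le_of_schur (by fun_prop) (hmeas _) (hmeas _).aemeasurable hg hf
    (fun y ↦ by simpa only [norm_sub_rev y] using hmass h₁ y) (hmass h₂)
  refine hschur.trans_eq ?_
  rw [← ENNReal.ofReal_mul (by positivity), ← ENNReal.ofReal_pow (by positivity)]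
  congr 2
  have hpow : c ^ (p - s₁) * c ^ (p - s₂) = (c ^ (p - (s₁ + s₂) / 2)) ^ 2 := by
    rw [← Real.rpow_add hc, ← Real.rpow_mul_natCast hc.le]
    ring_nf
  calc K * (C₁ * c ^ (p - s₁)) * (K * (C₂ * c ^ (p - s₂)))
      = C₁ * C₂ * K ^ 2 * (c ^ (p - s₁) * c ^ (p - s₂)) := by ring
    _ = √(C₁ * C₂) ^ 2 * K ^ 2 * (c ^ (p - (s₁ + s₂) / 2)) ^ 2 := by
      rw [hpow, Real.sq_sqrt (by positivity)]
    _ = (√(C₁ * C₂) * (K * c ^ (p - (s₁ + s₂) / 2))) ^ 2 := by ring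

end WeightedGaussian

section HeatKernel

variable (T : E ≃L[ℝ] F)

theorem integrable_heatDerivSymbol_sq_norm {c : ℝ} (hc : 0 < c) :
    Integrable (heatDerivSymbol (fun ξ : E ↦ ‖ξ‖ ^ 2) c) := by
  refine ((integrable_exp_neg_mul_sq_norm (half_pos hc)).const_mul (c - c / 2)⁻¹).mono'
    (Continuous.aestronglyMeasurable ?_) (.of_forall fun ξ ↦ ?_)
  · unfold heatDerivSymbol
    fun_prop
  · rw [norm_heatDerivSymbol fun ξ ↦ sq_nonneg ‖ξ‖]
    exact mul_exp_neg_mul_le_exp_neg_mul (half_lt_self hc)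

theorem exists_norm_multiplierKernel_heatDerivSymbol_le :
    ∃ M a : ℝ, 0 ≤ M ∧ 0 < a ∧ ∀ c : ℝ, 0 < c → ∀ z : E,
      ‖multiplierKernel (heatDerivSymbol (fun ξ ↦ ‖T ξ‖ ^ 2) c) z‖ ≤
        M * c ^ (-((finrank ℝ E : ℝ) / 2) - 1) * Real.exp (-(a / c * ‖z‖ ^ 2)) := by
  obtain ⟨r, hr⟩ := exists_multiplierKernel_comp_eq_smul T
  set p : ℝ := (finrank ℝ E : ℝ) / 2 with hp
  set A : ℝ := ‖((2 * Real.pi) ^ finrank ℝ F : ℂ)⁻¹‖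
  set N : ℝ := ‖(T : E →L[ℝ] F)‖ ^ 2 + 1
  have hN : 0 < N := by positivity
  refine ⟨r * A * Real.pi ^ p * (p + 2), 1 / (8 * N), by positivity, by positivity,
    fun c hc z ↦ ?_⟩
  set w : F := ContinuousLinearMap.adjoint (T.symm : F →L[ℝ] E) z
  have hzw : ‖z‖ ^ 2 ≤ N * ‖w‖ ^ 2 :=
    calc ‖z‖ ^ 2 ≤ (‖(T : E →L[ℝ] F)‖ * ‖w‖) ^ 2 := by
          gcongr
          exact norm_le_mul_norm_adjoint_symm T z
      _ ≤ N * ‖w‖ ^ 2 := by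
          rw [mul_pow]
          gcongr
          exact le_add_of_nonneg_right zero_le_one
  have hexp : 1 / (8 * N) / c * ‖z‖ ^ 2 ≤ ‖w‖ ^ 2 / 4 * c⁻¹ / 2 :=
    calc 1 / (8 * N) / c * ‖z‖ ^ 2 ≤ 1 / (8 * N) / c * (N * ‖w‖ ^ 2) := by gcongr
      _ = ‖w‖ ^ 2 / 4 * c⁻¹ / 2 := by
          field_simp
          ring
  calc ‖multiplierKernel (heatDerivSymbol (fun ξ ↦ ‖T ξ‖ ^ 2) c) z‖
      = r * ‖multiplierKernel (heatDerivSymbol (fun η : F ↦ ‖η‖ ^ 2) c) w‖ := by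
        rw [← NNReal.norm_eq, ← norm_smul]
        exact congrArg norm (hr (heatDerivSymbol (fun η : F ↦ ‖η‖ ^ 2) c) z)
    _ ≤ r * (A * (Real.pi ^ p * c ^ (-p - 1) *
          ((p + 2) * Real.exp (-(‖w‖ ^ 2 / 4 * c⁻¹ / 2))))) := by
        rw [hp, T.toLinearEquiv.finrank_eq]
        gcongr
        exact norm_multiplierKernel_heatDerivSymbol_sq_norm_le hc w
    _ ≤ r * (A * (Real.pi ^ p * c ^ (-p - 1) *
          ((p + 2) * Real.exp (-(1 / (8 * N) / c * ‖z‖ ^ 2))))) := by gcongr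
    _ = r * A * Real.pi ^ p * (p + 2) * c ^ (-p - 1) *
          Real.exp (-(1 / (8 * N) / c * ‖z‖ ^ 2)) := by ring

theorem integrable_japaneseBracket_rpow_neg_mul {r : ℝ} (hr : 0 ≤ r) {g : E → ℂ}
    (hg : Integrable g) : Integrable fun y ↦ ((japaneseBracket y ^ (-r) : ℝ) : ℂ) * g y := by
  refine hg.bdd_mul (c := 1) (Continuous.aestronglyMeasurable
    (Complex.continuous_ofReal.comp (continuous_japaneseBracket_rpow _))) (.of_forall fun y ↦ ?_)
  rw [Complex.norm_of_nonneg (Real.rpow_pos_of_pos (japaneseBracket_pos y) _).le]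
  exact japaneseBracket_rpow_neg_le_one hr y

theorem exists_eLpNorm_japaneseBracket_mul_fourierMultiplier_le {s₁ s₂ κ : ℝ}
    (hs₁ : s₁ ∈ Set.Icc (0 : ℝ) ((finrank ℝ E : ℝ) / 2))
    (hs₂ : s₂ ∈ Set.Icc (0 : ℝ) ((finrank ℝ E : ℝ) / 2)) (hκ : 1 < κ) :
    ∃ C : ℝ, 0 ≤ C ∧ ∀ c : ℝ, 0 < c → ∀ g : E → ℂ, Integrable g →
      eLpNorm (fun x ↦ ((japaneseBracket x ^ (-(κ * s₁)) : ℝ) : ℂ) *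
          fourierMultiplier (heatDerivSymbol (fun ξ ↦ ‖T ξ‖ ^ 2) c)
            (fun y ↦ ((japaneseBracket y ^ (-(κ * s₂)) : ℝ) : ℂ) * g y) x) 2 ^ 2 ≤
        ENNReal.ofReal (C * c ^ (-1 - (s₁ + s₂) / 2)) ^ 2 * eLpNorm g 2 ^ 2 := by
  obtain ⟨M, a, hM, ha, hkernel⟩ := exists_norm_multiplierKernel_heatDerivSymbol_le T
  obtain ⟨C, hC, hschur⟩ := exists_eLpNorm_two_le_of_gaussian_kernel ha hs₁ hs₂ hκ
  set p : ℝ := (finrank ℝ E : ℝ) / 2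
  refine ⟨C * M, by positivity, fun c hc g hg ↦ ?_⟩
  have hpow : C * M * c ^ (-1 - (s₁ + s₂) / 2) =
      C * (M * c ^ (-p - 1) * c ^ (p - (s₁ + s₂) / 2)) := by
    rw [mul_assoc M, ← Real.rpow_add hc, mul_assoc]
    ring_nf
  rw [hpow]
  refine hschur c (M * c ^ (-p - 1)) hc (by positivity) _ g hg.1 fun x ↦ ?_
  have henorm (x : E) (r : ℝ) : ‖((japaneseBracket x ^ r : ℝ) : ℂ)‖ₑ =
      ENNReal.ofReal (japaneseBracket x ^ r) := by
    rw [← ofReal_norm, Complex.norm_of_nonneg (Real.rpow_pos_of_pos (japaneseBracket_pos x) r).le]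
  have hsymbol : Integrable (heatDerivSymbol (fun ξ ↦ ‖T ξ‖ ^ 2) c) :=
    integrable_comp_continuousLinearEquiv T (integrable_heatDerivSymbol_sq_norm hc)
  rw [enorm_mul, henorm, fourierMultiplier_eq_integral_multiplierKernel hsymbol
    (integrable_japaneseBracket_rpow_neg_mul
      (mul_nonneg (zero_le_one.trans hκ.le) hs₂.1) hg)]
  gcongr
  refine (enorm_integral_le_lintegral_enorm _).trans (lintegral_mono fun y ↦ ?_)
  rw [enorm_mul, enorm_mul, henorm, ← ofReal_norm]
  gcongr
  exact hkernel c hc (x - y)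

end HeatKernel

section Coordinates

variable {ι : Type*} [Fintype ι]

theorem integral_toLp {G : Type*} [NormedAddCommGroup G] [NormedSpace ℝ G]
    (f : EuclideanSpace ℝ ι → G) : ∫ x : ι → ℝ, f (WithLp.toLp 2 x) = ∫ x, f x :=
  (PiLp.volume_preserving_toLp ι).integral_comp
    (MeasurableEquiv.toLp 2 (ι → ℝ)).measurableEmbedding f

theorem fourierMultiplier_toLp (m u : EuclideanSpace ℝ ι → ℂ) (x : ι → ℝ) :
    fourierMultiplier m u (WithLp.toLp 2 x) = ((2 * Real.pi) ^ Fintype.card ι : ℂ)⁻¹ *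
      ∫ ξ : ι → ℝ, Complex.exp (Complex.I * ((∑ i, x i * ξ i : ℝ) : ℂ)) * m (WithLp.toLp 2 ξ) *
        ∫ y : ι → ℝ, Complex.exp (-Complex.I * ((∑ i, y i * ξ i : ℝ) : ℂ)) *
          u (WithLp.toLp 2 y) := by
  simp only [fourierMultiplier, finrank_euclideanSpace, ← integral_toLp,
    PiLp.inner_apply, RCLike.inner_apply, conj_trivial, mul_comm]

theorem japaneseBracket_toLp_rpow (x : ι → ℝ) (r : ℝ) :
    japaneseBracket (WithLp.toLp 2 x) ^ r = (1 + ∑ i, x i ^ 2) ^ (r / 2) := by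
  rw [japaneseBracket_rpow, EuclideanSpace.real_norm_sq_eq]

theorem exists_continuousLinearEquiv_sum_mul_eq_sq_norm {A : ι → ι → ℝ}
    (hA : ∀ ξ : ι → ℝ, ξ ≠ 0 → 0 < ∑ i, ∑ j, A i j * ξ i * ξ j) :
    ∃ T : EuclideanSpace ℝ ι ≃L[ℝ] EuclideanSpace ℝ (Fin (finrank ℝ (EuclideanSpace ℝ ι))),
      ∀ ξ : ι → ℝ, ∑ i, ∑ j, A i j * ξ i * ξ j = ‖T (WithLp.toLp 2 ξ)‖ ^ 2 := by
  classical
  let Q : QuadraticForm ℝ (EuclideanSpace ℝ ι) :=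
    (Matrix.of A).toQuadraticForm'.comp (WithLp.linearEquiv 2 ℝ (ι → ℝ)).toLinearMap
  have hQ (ξ : EuclideanSpace ℝ ι) : Q ξ = ∑ i, ∑ j, A i j * ξ i * ξ j := by
    simp [Q, Matrix.toQuadraticForm', Matrix.toLinearMap₂'_apply, mul_comm, mul_left_comm,
      mul_assoc]
  obtain ⟨T, hT⟩ := exists_continuousLinearEquiv_eq_sq_norm (Q := Q) fun ξ hξ ↦ by
    rw [hQ]
    exact hA _ (by simpa using hξ)
  exact ⟨T, fun ξ ↦ by rw [← hT, hQ]⟩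

end Coordinates

theorem stmt10_general {d : ℕ} (Gs : Fin d → Fin d → ℝ)
    (hGpos : ∀ ξ : Fin d → ℝ, ξ ≠ 0 → 0 < ∑ i, ∑ j, Gs i j * ξ i * ξ j)
    (b : ℝ) (hb : 0 < b)
    (s₁ s₂ κ : ℝ) (hs₁ : s₁ ∈ Set.Icc (0 : ℝ) ((d : ℝ) / 2))
    (hs₂ : s₂ ∈ Set.Icc (0 : ℝ) ((d : ℝ) / 2)) (hκ : 1 < κ) :
    ∃ C : ℝ, 0 ≤ C ∧ ∀ t : ℝ, 0 < t → ∀ g : (Fin d → ℝ) → ℂ, Integrable g → MemLp g 2 →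
      Real.sqrt (∫ x : Fin d → ℝ,
          (1 + ∑ i, x i ^ 2) ^ (-(κ * s₁)) *
            ‖((2 * Real.pi) ^ d : ℂ)⁻¹ *
              ∫ ξ : Fin d → ℝ,
                Complex.exp (Complex.I * ((∑ i, x i * ξ i : ℝ) : ℂ)) *
                (((∑ i, ∑ j, Gs i j * ξ i * ξ j : ℝ) : ℂ)) *
                  Complex.exp (-(((t / b) * ∑ i, ∑ j, Gs i j * ξ i * ξ j : ℝ) : ℂ)) *
                ∫ y : Fin d → ℝ,
                  Complex.exp (-Complex.I * ((∑ i, y i * ξ i : ℝ) : ℂ)) *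
                    ((((1 + ∑ i, y i ^ 2) ^ (-(κ * s₂) / 2) : ℝ) : ℂ) * g y)‖ ^ 2)
        ≤ C * t ^ (-1 - (s₁ + s₂) / 2) * Real.sqrt (∫ x : Fin d → ℝ, ‖g x‖ ^ 2) := by
  obtain ⟨T, hT⟩ := exists_continuousLinearEquiv_sum_mul_eq_sq_norm hGpos
  rw [← finrank_euclideanSpace_fin (𝕜 := ℝ) (n := d)] at hs₁ hs₂
  obtain ⟨C, hC, hbound⟩ :=
    exists_eLpNorm_japaneseBracket_mul_fourierMultiplier_le T hs₁ hs₂ hκ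
  set e : ℝ := -1 - (s₁ + s₂) / 2
  refine ⟨C / b ^ e, by positivity, fun t ht g hg hg2 ↦ ?_⟩
  have hofLp := PiLp.volume_preserving_ofLp (Fin d)
  have h := sqrt_integral_sq_norm_le_of_eLpNorm_two_le (hg2.comp_measurePreserving hofLp)
    (by positivity) (hbound (t / b) (by positivity) _ (hofLp.integrable_comp_of_integrable hg))
  have hscale : C / b ^ e * t ^ e = C * (t / b) ^ e := by
    rw [Real.div_rpow ht.le hb.le]
    ring
  simp only [← integral_toLp, sq_norm_japaneseBracket_rpow_mul, fourierMultiplier_toLp,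
    heatDerivSymbol, ← hT, japaneseBracket_toLp_rpow, EuclideanSpace.real_norm_sq_eq,
    Fintype.card_fin, Function.comp_apply] at h
  simpa only [hscale, mul_assoc] using h

end

/-- Heat-kernel time-derivative decay: with `P = -div(G*∇)`, `b > 0`, `s₁, s₂ ∈ [0,d/2]`,
`κ > 1`, there is `C ≥ 0` with
`‖⟨x⟩^{-κs₁} P e^{-tP/b} ⟨x⟩^{-κs₂}‖_{L(L²)} ≤ C t^{-1-(s₁+s₂)/2}` for `t ≥ 1`;
`P e^{-tP/b}` is the Fourier multiplier `⟨G*ξ,ξ⟩ e^{-t⟨G*ξ,ξ⟩/b}`, and the operator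
bound is expressed by testing against Schwartz functions `g`. -/
theorem stmt10 {d : ℕ} (Gs : Fin d → Fin d → ℝ)
    (hGsym : ∀ i j, Gs i j = Gs j i)
    (hGpos : ∀ ξ : Fin d → ℝ, ξ ≠ 0 → 0 < ∑ i, ∑ j, Gs i j * ξ i * ξ j)
    (b : ℝ) (hb : 0 < b)
    (s₁ s₂ κ : ℝ) (hs₁ : s₁ ∈ Set.Icc (0 : ℝ) ((d : ℝ) / 2))
    (hs₂ : s₂ ∈ Set.Icc (0 : ℝ) ((d : ℝ) / 2)) (hκ : 1 < κ) :
    ∃ C : ℝ, 0 ≤ C ∧ ∀ t : ℝ, 1 ≤ t → ∀ g : SchwartzMap (Fin d → ℝ) ℂ,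
      Real.sqrt (∫ x : Fin d → ℝ,
          (1 + ∑ i, x i ^ 2) ^ (-(κ * s₁)) *
            ‖((2 * Real.pi) ^ d : ℂ)⁻¹ *
              ∫ ξ : Fin d → ℝ,
                Complex.exp (Complex.I * ((∑ i, x i * ξ i : ℝ) : ℂ)) *
                (((∑ i, ∑ j, Gs i j * ξ i * ξ j : ℝ) : ℂ)) * Complex.exp (-(((t / b) * ∑ i, ∑ j, Gs i j * ξ i * ξ j : ℝ) : ℂ)) *
                ∫ y : Fin d → ℝ,
                  Complex.exp (-Complex.I * ((∑ i, y i * ξ i : ℝ) : ℂ)) *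
                    ((((1 + ∑ i, y i ^ 2) ^ (-(κ * s₂) / 2) : ℝ) : ℂ) * g y)‖ ^ 2)
        ≤ C * t ^ (-1 - (s₁ + s₂) / 2) * Real.sqrt (∫ x : Fin d → ℝ, ‖g x‖ ^ 2) := by
  obtain ⟨C, hC, h⟩ := stmt10_general Gs hGpos b hb s₁ s₂ κ hs₁ hs₂ hκ
  exact ⟨C, hC, fun t ht g ↦ h t (zero_lt_one.trans_le ht) g g.integrable (g.memLp 2)⟩
end
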